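/- arXiv:2501.01322 — 3 statements merged into one kernel-verified Lean document; each statement's English description precedes it below -/
import Mathlib

section
/- There exists a constant c₁ > 0 such that for every real a and every irreducible fraction p/q (q ≥ 1) with |a - p/q| ≤ 1/q², every b ∈ ℝ, and all integers 0 < M < N: |Σ_{n=M}^{N} e^{2πi(an² + bn)}| ≤ c₁((N-M)/√q + √q). -/
open Real Finset

/-!
Write `S(α) = ∑ e(α n² / 2 + β n)` over the integers of an interval. Convolving the summands with a
Gaussian of width `1 / √α` changes the sum, suitably normalised, by `O(1 / √α)` only, because
shifting an interval by `u` affects at most `|u| + 1` integers at each end. Poisson summation turns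
the smoothed sum for `α` into a smoothed sum for `-1 / α` over an interval shorter by the factor
`α`, whose unsmoothing costs `O(1)` for the same reason. Hence `|S(α)| ≤ (|S(-1 / α)| + O(1)) / √α`
for `0 < α ≤ 1`, uniformly in `β` and in the interval.

As `S` depends on `α` modulo `1` only up to a change of `β`, Euclid's algorithm with absolutely
least remainders can be run on `α = r / q`. The errors grow geometrically, so no logarithm is lost
and sums over intervals of length at most `q` are `O(√(gcd(r, q) q))`. Partial summation transfers
this to `α` near `r / q`, and a long interval is cut into blocks of length `q`.
-/

open MeasureTheory
open scoped FourierTransform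

/-- The sum of `c` over the integers in the real interval `(A, B]`. -/
noncomputable def intervalSum {E : Type*} [AddCommMonoid E] (c : ℤ → E) (A B : ℝ) : E :=
  ∑ n ∈ Ioc ⌊A⌋ ⌊B⌋, c n

section IntervalSum

variable {E : Type*}

lemma mem_Ioc_floor_iff {A B : ℝ} {n : ℤ} : n ∈ Ioc ⌊A⌋ ⌊B⌋ ↔ A < n ∧ (n : ℝ) ≤ B := by
  rw [Finset.mem_Ioc, Int.floor_lt, Int.le_floor]

lemma card_Ioc_floor_le {A B : ℝ} (hAB : A ≤ B) : (#(Ioc ⌊A⌋ ⌊B⌋) : ℝ) ≤ B - A + 1 := by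
  have hcard : (#(Ioc ⌊A⌋ ⌊B⌋) : ℝ) = ⌊B⌋ - ⌊A⌋ := by
    exact_mod_cast Int.card_Ioc_of_le _ _ (Int.floor_mono hAB)
  rw [hcard]
  linarith [Int.floor_le B, Int.lt_floor_add_one A]

lemma intervalSum_add_intervalSum [AddCommMonoid E] (c : ℤ → E) {A B C : ℝ} (hAB : A ≤ B)
    (hBC : B ≤ C) : intervalSum c A B + intervalSum c B C = intervalSum c A C := by
  unfold intervalSum
  rw [← Ioc_union_Ioc_eq_Ioc (Int.floor_mono hAB) (Int.floor_mono hBC),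
    sum_union (Ioc_disjoint_Ioc_of_le le_rfl)]

lemma sum_range_eq_intervalSum [AddCommMonoid E] (c : ℤ → E) (K : ℕ) :
    ∑ n ∈ range K, c n = intervalSum c (-1) (K - 1) := by
  have hfloor : ⌊(K : ℝ) - 1⌋ = K - 1 := by rw [Int.floor_sub_one, Int.floor_natCast]
  have hfloor_neg : ⌊(-1 : ℝ)⌋ = -1 := by exact_mod_cast Int.floor_intCast (R := ℝ) (-1)
  simp [intervalSum, hfloor, hfloor_neg, Int.Ioc_eq_finset_map]

lemma norm_intervalSum_le [SeminormedAddCommGroup E] {c : ℤ → E} (hc : ∀ n, ‖c n‖ ≤ 1) {A B : ℝ}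
    (hAB : A ≤ B) : ‖intervalSum c A B‖ ≤ B - A + 1 :=
  calc ‖intervalSum c A B‖ ≤ #(Ioc ⌊A⌋ ⌊B⌋) • (1 : ℝ) :=
        norm_sum_le_of_le _ (fun n _ ↦ hc n) |>.trans_eq (sum_const _)
    _ ≤ B - A + 1 := by simpa using card_Ioc_floor_le hAB

lemma norm_intervalSum_translate_sub_le [SeminormedAddCommGroup E] {c : ℤ → E}
    (hc : ∀ n, ‖c n‖ ≤ 1) {A B : ℝ} (hAB : A ≤ B) (u : ℝ) :
    ‖intervalSum c (A - u) (B - u) - intervalSum c A B‖ ≤ 2 * (|u| + 1) := by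
  have hshort : ∀ {x y : ℝ}, x ≤ y → y - x = |u| → ‖intervalSum c x y‖ ≤ |u| + 1 :=
    fun hxy h ↦ h ▸ norm_intervalSum_le hc hxy
  rcases le_total 0 u with hu | hu
  · have hswap : intervalSum c (A - u) (B - u) - intervalSum c A B =
        intervalSum c (A - u) A - intervalSum c (B - u) B := by
      rw [sub_eq_sub_iff_add_eq_add,
        intervalSum_add_intervalSum c (by linarith) (by linarith),
        intervalSum_add_intervalSum c (by linarith) hAB]
    rw [hswap, two_mul]
    exact norm_sub_le_of_le (hshort (by linarith) (by rw [abs_of_nonneg hu]; ring))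
      (hshort (by linarith) (by rw [abs_of_nonneg hu]; ring))
  · have hswap : intervalSum c (A - u) (B - u) - intervalSum c A B =
        intervalSum c B (B - u) - intervalSum c A (A - u) := by
      rw [sub_eq_sub_iff_add_eq_add, add_comm, add_comm (intervalSum c B _),
        intervalSum_add_intervalSum c (by linarith) (by linarith),
        intervalSum_add_intervalSum c hAB (by linarith)]
    rw [hswap, two_mul]
    exact norm_sub_le_of_le (hshort (by linarith) (by rw [abs_of_nonpos hu]; ring))
      (hshort (by linarith) (by rw [abs_of_nonpos hu]; ring))

lemma measurable_intervalSum_translate (c : ℤ → ℂ) (A B : ℝ) :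
    Measurable fun u : ℝ ↦ intervalSum c (A - u) (B - u) := by
  have hsum : Measurable fun k : ℤ × ℤ ↦ ∑ n ∈ Ioc k.1 k.2, c n := measurable_of_countable _
  have hfloor : Measurable fun u : ℝ ↦ (⌊A - u⌋, ⌊B - u⌋) := by fun_prop
  simpa only [intervalSum, Function.comp_def] using hsum.comp hfloor

end IntervalSum

section Smoothing

variable {h : ℝ → ℂ} {A B : ℝ}

lemma indicator_Ioc_sub_apply (f : ℝ → ℂ) (A B u : ℝ) (n : ℤ) :
    (Set.Ioc (A - n) (B - n)).indicator f u = if n ∈ Ioc ⌊A - u⌋ ⌊B - u⌋ then f u else 0 := by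
  have hiff : u ∈ Set.Ioc (A - n) (B - n) ↔ n ∈ Ioc ⌊A - u⌋ ⌊B - u⌋ := by
    rw [mem_Ioc_floor_iff, Set.mem_Ioc]
    constructor <;> rintro ⟨_, _⟩ <;> constructor <;> linarith
  simp only [Set.indicator_apply, hiff]

lemma tsum_indicator_Ioc_sub (c : ℤ → ℂ) (h : ℝ → ℂ) (A B u : ℝ) :
    ∑' n : ℤ, (Set.Ioc (A - n) (B - n)).indicator (fun u ↦ c n * h u) u =
      h u * intervalSum c (A - u) (B - u) := by
  simp_rw [indicator_Ioc_sub_apply]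
  rw [tsum_eq_sum fun n hn ↦ if_neg hn, intervalSum, mul_sum]
  exact sum_congr rfl fun n hn ↦ by rw [if_pos hn, mul_comm]

-- Each point lies in at most `B - A + 1` of the intervals `(A - n, B - n]`.
lemma summable_integral_norm_indicator_Ioc_sub {c : ℤ → ℂ} (hc : ∀ n, ‖c n‖ ≤ 1)
    (hh : Integrable h) (hAB : A ≤ B) :
    Summable fun n : ℤ ↦ ∫ u, ‖(Set.Ioc (A - n) (B - n)).indicator (fun u ↦ c n * h u) u‖ := by
  refine summable_of_sum_le (c := ∫ u, (B - A + 1) * ‖h u‖)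
    (fun n ↦ integral_nonneg fun u ↦ norm_nonneg _) fun s ↦ ?_
  have hint (n : ℤ) :
      Integrable fun u ↦ ‖(Set.Ioc (A - n) (B - n)).indicator (fun u ↦ c n * h u) u‖ :=
    ((hh.const_mul (c n)).indicator measurableSet_Ioc).norm
  rw [← integral_finsetSum s fun n _ ↦ hint n]
  refine integral_mono (integrable_finsetSum s fun n _ ↦ hint n) (hh.norm.const_mul _) fun u ↦ ?_
  calc ∑ n ∈ s, ‖(Set.Ioc (A - n) (B - n)).indicator (fun u ↦ c n * h u) u‖
    _ ≤ ∑ n ∈ s, if n ∈ Ioc ⌊A - u⌋ ⌊B - u⌋ then ‖h u‖ else 0 := by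
        gcongr with n
        rw [indicator_Ioc_sub_apply]
        split_ifs
        · rw [norm_mul]
          exact mul_le_of_le_one_left (norm_nonneg _) (hc n)
        · rw [norm_zero]
    _ ≤ #(Ioc ⌊A - u⌋ ⌊B - u⌋) * ‖h u‖ := by
        rw [← sum_filter, sum_const, nsmul_eq_mul]
        gcongr
        exact fun n hn ↦ (mem_filter.1 hn).2
    _ ≤ (B - A + 1) * ‖h u‖ := by
        gcongr
        exact (card_Ioc_floor_le (by linarith)).trans_eq (by ring)

lemma setIntegral_Ioc_comp_sub {E : Type*} [NormedAddCommGroup E] [NormedSpace ℝ E] (f : ℝ → E)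
    (A B x : ℝ) :
    ∫ t in Set.Ioc A B, f (t - x) = ∫ u, (Set.Ioc (A - x) (B - x)).indicator f u := by
  rw [← integral_indicator measurableSet_Ioc,
    ← integral_sub_right_eq_self ((Set.Ioc (A - x) (B - x)).indicator f) x]
  congr 1 with t
  simp [Set.indicator_apply]

lemma intervalIntegral_tsum_mul_comp_sub {c : ℤ → ℂ} (hc : ∀ n, ‖c n‖ ≤ 1) (hh : Integrable h)
    (hAB : A ≤ B) :
    ∫ t in A..B, ∑' n : ℤ, c n * h (t - n) = ∫ u, h u * intervalSum c (A - u) (B - u) := by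
  have hsummable := summable_integral_norm_indicator_Ioc_sub hc hh hAB
  rw [intervalIntegral.integral_of_le hAB, ← integral_tsum_of_summable_integral_norm]
  · simp_rw [fun n : ℤ ↦ setIntegral_Ioc_comp_sub (fun u ↦ c n * h u) A B n]
    rw [integral_tsum_of_summable_integral_norm _ hsummable]
    · simp_rw [tsum_indicator_Ioc_sub]
    · exact fun n ↦ (hh.const_mul (c n)).indicator measurableSet_Ioc
  · exact fun n ↦ ((hh.comp_sub_right (n : ℝ)).const_mul (c n)).integrableOn
  · simp_rw [fun n : ℤ ↦ setIntegral_Ioc_comp_sub (fun u ↦ ‖c n * h u‖) A B n,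
      ← norm_indicator_eq_indicator_norm]
    exact hsummable

lemma norm_intervalIntegral_tsum_sub_le {c : ℤ → ℂ} (hc : ∀ n, ‖c n‖ ≤ 1) (hh : Integrable h)
    (hh' : Integrable fun u ↦ ‖h u‖ * |u|) (hAB : A ≤ B) :
    ‖(∫ t in A..B, ∑' n : ℤ, c n * h (t - n)) - (∫ u, h u) * intervalSum c A B‖ ≤
      2 * ((∫ u, ‖h u‖ * |u|) + ∫ u, ‖h u‖) := by
  have hint : Integrable fun u ↦ 2 * (‖h u‖ * |u| + ‖h u‖) := (hh'.add hh.norm).const_mul 2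
  have hbound (u : ℝ) : ‖h u * (intervalSum c (A - u) (B - u) - intervalSum c A B)‖ ≤
      2 * (‖h u‖ * |u| + ‖h u‖) :=
    calc _ ≤ ‖h u‖ * (2 * (|u| + 1)) := by
          rw [norm_mul]
          gcongr
          exact norm_intervalSum_translate_sub_le hc hAB u
      _ = _ := by ring
  have hdiff : Integrable fun u ↦ h u * (intervalSum c (A - u) (B - u) - intervalSum c A B) :=
    hint.mono'
      (hh.1.mul ((measurable_intervalSum_translate c A B).sub_const _).aestronglyMeasurable)
      (.of_forall hbound)
  calc _ = ‖∫ u, h u * (intervalSum c (A - u) (B - u) - intervalSum c A B)‖ := by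
        rw [intervalIntegral_tsum_mul_comp_sub hc hh hAB, ← integral_mul_const, sub_eq_iff_eq_add.2]
        rw [← integral_add hdiff (hh.mul_const _)]
        simp_rw [← mul_add, sub_add_cancel]
    _ ≤ ∫ u, 2 * (‖h u‖ * |u| + ‖h u‖) := norm_integral_le_of_norm_le hint (.of_forall hbound)
    _ = _ := by rw [integral_const_mul, integral_add hh' hh.norm]

end Smoothing

lemma integral_abs_mul_exp_neg_mul_sq {b : ℝ} (hb : 0 < b) :
    ∫ u : ℝ, exp (-b * u ^ 2) * |u| = 1 / b := by
  have hhalf : ∫ u in Set.Ioi (0 : ℝ), exp (-b * u ^ 2) * u = 1 / b / 2 := by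
    have := integral_rpow_mul_exp_neg_mul_rpow (p := 2) (q := 1) two_pos (by norm_num) hb
    norm_num [rpow_neg_one] at this
    simp [mul_comm (exp _), this, div_eq_mul_inv]
  have := integral_comp_abs (f := fun u ↦ exp (-b * u ^ 2) * u)
  simp only [sq_abs] at this
  rw [this, hhalf, mul_div_cancel₀ _ two_ne_zero]

lemma norm_cpow_one_half (z : ℂ) : ‖z ^ (1 / 2 : ℂ)‖ = √‖z‖ := by
  rw [sqrt_eq_rpow, ← Complex.norm_cpow_real]
  norm_num

/-- The quadratic phase `e(α n² / 2 + β n)`, where `e(x) = exp (2πix)`. Halving `α` is what makes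
Poisson summation act on it by `α ↦ -1 / α`. -/
noncomputable def quadPhase (α β : ℝ) (n : ℤ) : ℂ := 𝐞 (α * n ^ 2 / 2 + β * n)

lemma norm_quadPhase (α β : ℝ) (n : ℤ) : ‖quadPhase α β n‖ = 1 := Circle.norm_coe _

lemma fourierChar_intCast (k : ℤ) : 𝐞 (k : ℝ) = 1 := by
  ext
  rw [fourierChar_apply, Circle.coe_one, Complex.exp_eq_one_iff]
  exact ⟨k, by push_cast; ring⟩

lemma norm_fourierChar_sub_le (x y : ℝ) : ‖(𝐞 x - 𝐞 y : ℂ)‖ ≤ 2 * π * |x - y| := by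
  have hfactor : (𝐞 x - 𝐞 y : ℂ) = 𝐞 y * (𝐞 (x - y) - 1) := by
    rw [mul_sub, mul_one, ← Circle.coe_mul, ← AddChar.map_add_eq_mul, add_sub_cancel]
  calc ‖(𝐞 x - 𝐞 y : ℂ)‖ = ‖Complex.exp (Complex.I * (2 * π * (x - y) : ℝ)) - 1‖ := by
        rw [hfactor, norm_mul, Circle.norm_coe, one_mul, fourierChar_apply, mul_comm]
    _ ≤ ‖2 * π * (x - y)‖ := norm_exp_I_mul_ofReal_sub_one_le
    _ = 2 * π * |x - y| := by
        rw [norm_mul, norm_of_nonneg two_pi_pos.le, norm_eq_abs]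

lemma quadPhase_add_intCast (α β : ℝ) (k n : ℤ) :
    quadPhase (α + k) β n = quadPhase α (β + k / 2) n := by
  obtain ⟨l, hl⟩ := Int.even_mul_pred_self n
  have hl' : (n : ℝ) * (n - 1) = l + l := by exact_mod_cast hl
  have hphase : (α + k) * n ^ 2 / 2 + β * n =
      (α * n ^ 2 / 2 + (β + k / 2) * n) + ((k * l : ℤ) : ℝ) := by
    push_cast
    linear_combination (k : ℝ) / 2 * hl'
  rw [quadPhase, hphase, AddChar.map_add_eq_mul, fourierChar_intCast, mul_one, quadPhase]

lemma quadPhase_neg (α β : ℝ) (n : ℤ) :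
    quadPhase (-α) β n = starRingEnd ℂ (quadPhase α (-β) n) := by
  rw [quadPhase, quadPhase, ← Circle.coe_inv_eq_conj, ← AddChar.map_neg_eq_inv]
  congr 2
  ring

lemma quadPhase_mul_gaussian (α β t : ℝ) (n : ℤ) :
    quadPhase α β n * Complex.exp (-(π * α : ℝ) * ((t - n : ℝ) : ℂ) ^ 2) =
      Complex.exp (-π * α * t ^ 2) * Complex.exp
        (-π * (α * (1 - Complex.I)) * n ^ 2 + 2 * π * (α * t + Complex.I * β) * n) := by
  rw [quadPhase, fourierChar_apply, ← Complex.exp_add, ← Complex.exp_add]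
  congr 1
  push_cast
  ring

lemma gaussian_mul_dual_gaussian {α : ℝ} (hα : α ≠ 0) (β t : ℝ) (m : ℤ) :
    Complex.exp (-π * α * t ^ 2) * Complex.exp
        (-π / (α * (1 - Complex.I)) * (m + Complex.I * (α * t + Complex.I * β)) ^ 2) =
      𝐞 (-(β ^ 2 / (2 * α))) * (quadPhase (-(1 / α)) (β / α) m *
        Complex.exp (-((π / (2 * α) : ℝ) * (1 - Complex.I)) *
          ((α * t + β - m : ℝ) : ℂ) ^ 2)) := by
  have hα' : (α : ℂ) ≠ 0 := by exact_mod_cast hα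
  have hI : (1 - Complex.I) ≠ 0 := fun h ↦ by simpa using congrArg Complex.re h
  have hinv : -(π : ℂ) / (α * (1 - Complex.I)) = -π * (1 + Complex.I) / (2 * α) := by
    field_simp
    linear_combination -Complex.I_sq
  have hlin : (m : ℂ) + Complex.I * (α * t + Complex.I * β) = m - β + Complex.I * α * t := by
    linear_combination (β : ℂ) * Complex.I_sq
  rw [quadPhase, fourierChar_apply, fourierChar_apply, hinv, hlin, ← Complex.exp_add,
    ← Complex.exp_add, ← Complex.exp_add]
  congr 1
  push_cast
  field_simp
  linear_combination
    (-(2 * α * t * (m - β) + (1 + Complex.I) * α ^ 2 * t ^ 2) : ℂ) * Complex.I_sq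

lemma tsum_quadPhase_mul_gaussian {α : ℝ} (hα : 0 < α) (β t : ℝ) :
    ∑' n : ℤ, quadPhase α β n * Complex.exp (-(π * α : ℝ) * ((t - n : ℝ) : ℂ) ^ 2) =
      𝐞 (-(β ^ 2 / (2 * α))) / (α * (1 - Complex.I)) ^ (1 / 2 : ℂ) *
        ∑' m : ℤ, quadPhase (-(1 / α)) (β / α) m *
          Complex.exp (-((π / (2 * α) : ℝ) * (1 - Complex.I)) *
            ((α * t + β - m : ℝ) : ℂ) ^ 2) := by
  have hre : 0 < (α * (1 - Complex.I) : ℂ).re := by simpa using hα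
  simp_rw [quadPhase_mul_gaussian]
  rw [tsum_mul_left, Complex.tsum_exp_neg_quadratic hre, mul_left_comm, ← tsum_mul_left]
  simp_rw [gaussian_mul_dual_gaussian hα.ne']
  rw [tsum_mul_left]
  ring

/-- The integral over `[A, B]` of the convolution of the sequence `c` with the Gaussian
`u ↦ exp (-z u²)`: a smoothed version of `intervalSum c A B`, up to the mass `(π / z) ^ (1 / 2)`. -/
noncomputable def gaussianSmoothedSum (c : ℤ → ℂ) (z : ℂ) (A B : ℝ) : ℂ :=
  ∫ t in A..B, ∑' n : ℤ, c n * Complex.exp (-z * ((t - n : ℝ) : ℂ) ^ 2)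

lemma norm_gaussianSmoothedSum_sub_le {c : ℤ → ℂ} (hc : ∀ n, ‖c n‖ ≤ 1) {z : ℂ}
    (hz : 0 < z.re) {A B : ℝ} (hAB : A ≤ B) :
    ‖gaussianSmoothedSum c z A B - (π / z) ^ (1 / 2 : ℂ) * intervalSum c A B‖ ≤
      2 * (1 / z.re + √(π / z.re)) := by
  have hmoment : Integrable fun u : ℝ ↦ exp (-z.re * u ^ 2) * |u| := by
    simpa [abs_mul, mul_comm] using (integrable_mul_exp_neg_mul_sq hz).abs
  have herror := norm_intervalIntegral_tsum_sub_le hc (integrable_cexp_neg_mul_sq hz)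
    (by simpa only [norm_cexp_neg_mul_sq] using hmoment) hAB
  simpa only [gaussianSmoothedSum, norm_cexp_neg_mul_sq, integral_gaussian_complex hz,
    integral_abs_mul_exp_neg_mul_sq hz, integral_gaussian] using herror

lemma norm_one_sub_I : ‖1 - Complex.I‖ = √2 := by
  rw [Complex.norm_def, Complex.normSq_apply]
  norm_num

lemma norm_gaussianSmoothedSum_quadPhase {α : ℝ} (hα : 0 < α) (β A B : ℝ) :
    ‖gaussianSmoothedSum (quadPhase α β) (π * α : ℝ) A B‖ =
      ‖gaussianSmoothedSum (quadPhase (-(1 / α)) (β / α)) ((π / (2 * α) : ℝ) * (1 - Complex.I))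
        (α * A + β) (α * B + β)‖ / (α * √(α * √2)) := by
  unfold gaussianSmoothedSum
  simp_rw [tsum_quadPhase_mul_gaussian hα β]
  rw [intervalIntegral.integral_const_mul,
    intervalIntegral.integral_comp_mul_add (fun s : ℝ ↦ ∑' m : ℤ, quadPhase (-(1 / α)) (β / α) m *
      Complex.exp (-((π / (2 * α) : ℝ) * (1 - Complex.I)) * ((s - m : ℝ) : ℂ) ^ 2)) hα.ne',
    norm_mul, norm_div, Circle.norm_coe, norm_smul, norm_inv, norm_cpow_one_half, norm_mul,
    Complex.norm_real, norm_of_nonneg hα.le, norm_one_sub_I]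
  ring

lemma norm_gaussianSmoothedSum_dual_le {c : ℤ → ℂ} (hc : ∀ n, ‖c n‖ ≤ 1) {α : ℝ} (hα : 0 < α)
    (hα1 : α ≤ 1) {A B : ℝ} (hAB : A ≤ B) :
    ‖gaussianSmoothedSum c ((π / (2 * α) : ℝ) * (1 - Complex.I)) A B‖ ≤
      √(α * √2) * (‖intervalSum c A B‖ + 5) := by
  set z : ℂ := (π / (2 * α) : ℝ) * (1 - Complex.I) with hz
  have hzre : z.re = π / (2 * α) := by simp [hz, -Complex.ofReal_div]
  have hzpos : 0 < z.re := by rw [hzre]; positivity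
  have hmass : ‖(π / z) ^ (1 / 2 : ℂ)‖ = √(α * √2) := by
    rw [norm_cpow_one_half, norm_div, hz, norm_mul, norm_one_sub_I, Complex.norm_real,
      Complex.norm_real, norm_of_nonneg pi_pos.le, norm_of_nonneg (by positivity)]
    congr 1
    field_simp
    norm_num
  have herror : 2 * (1 / z.re + √(π / z.re)) ≤ 5 * √(α * √2) := by
    have hmoment : 1 / z.re ≤ √α := by
      rw [hzre, one_div_div, div_le_iff₀ pi_pos]
      nlinarith [sq_sqrt hα.le, sqrt_nonneg α, sqrt_le_one.2 hα1, pi_gt_three]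
    have hnorm : √(π / z.re) ≤ 3 / 2 * √α := by
      rw [hzre, sqrt_le_left (by positivity), mul_pow, sq_sqrt hα.le]
      field_simp
      norm_num
    have hmono : √α ≤ √(α * √2) :=
      sqrt_le_sqrt (le_mul_of_one_le_right hα.le (one_le_sqrt.2 one_le_two))
    linarith
  have hsmooth := norm_gaussianSmoothedSum_sub_le hc hzpos hAB
  calc ‖gaussianSmoothedSum c z A B‖
    _ ≤ ‖(π / z) ^ (1 / 2 : ℂ) * intervalSum c A B‖ + 2 * (1 / z.re + √(π / z.re)) :=
        norm_le_norm_add_const_of_dist_le (by rwa [dist_eq_norm])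
    _ ≤ √(α * √2) * (‖intervalSum c A B‖ + 5) := by
        rw [norm_mul, hmass]
        linarith

lemma norm_intervalSum_le_norm_gaussianSmoothedSum {c : ℤ → ℂ} (hc : ∀ n, ‖c n‖ ≤ 1) {α : ℝ}
    (hα : 0 < α) (hα1 : α ≤ 1) {A B : ℝ} (hAB : A ≤ B) :
    ‖intervalSum c A B‖ ≤ √α * (‖gaussianSmoothedSum c (π * α : ℝ) A B‖ + 3 / α) := by
  have hsqrt : 0 < √α := sqrt_pos.2 hα
  have hmass : ‖(π / (π * α : ℝ) : ℂ) ^ (1 / 2 : ℂ)‖ = 1 / √α := by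
    rw [norm_cpow_one_half, ← Complex.ofReal_div, Complex.norm_real,
      div_mul_cancel_left₀ pi_ne_zero, norm_of_nonneg (by positivity), sqrt_inv, one_div]
  have herror : 2 * (1 / (π * α) + √(π / (π * α))) ≤ 3 / α := by
    have hmoment : 1 / (π * α) ≤ 1 / 3 * (1 / α) := by
      rw [← one_div_mul_one_div]
      gcongr
      exact pi_gt_three.le
    have hnorm : √(π / (π * α)) ≤ 1 / α := by
      rw [div_mul_cancel_left₀ pi_ne_zero, ← one_div, sqrt_le_left (by positivity)]
      exact le_self_pow₀ (one_le_one_div hα hα1) two_ne_zero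
    rw [show 3 / α = 3 * (1 / α) by ring]
    linarith [one_div_pos.2 hα]
  have hsmooth := norm_gaussianSmoothedSum_sub_le hc (z := (π * α : ℝ))
    (by rw [Complex.ofReal_re]; positivity) hAB
  rw [Complex.ofReal_re, ← dist_eq_norm, dist_comm] at hsmooth
  have := norm_le_norm_add_const_of_dist_le hsmooth
  rw [norm_mul, hmass, div_mul_eq_mul_div, one_mul, div_le_iff₀' hsqrt] at this
  refine this.trans ?_
  gcongr

lemma norm_intervalSum_quadPhase_le_dual {α : ℝ} (hα : 0 < α) (hα1 : α ≤ 1) (β : ℝ) {A B : ℝ}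
    (hAB : A ≤ B) :
    ‖intervalSum (quadPhase α β) A B‖ ≤
      (‖intervalSum (quadPhase (-(1 / α)) (β / α)) (α * A + β) (α * B + β)‖ + 8) / √α := by
  have hdual := norm_gaussianSmoothedSum_dual_le
    (fun m ↦ (norm_quadPhase (-(1 / α)) (β / α) m).le) hα hα1 (show α * A + β ≤ α * B + β by gcongr)
  set R := intervalSum (quadPhase (-(1 / α)) (β / α)) (α * A + β) (α * B + β)
  calc ‖intervalSum (quadPhase α β) A B‖
    _ ≤ √α * (‖gaussianSmoothedSum (quadPhase α β) (π * α : ℝ) A B‖ + 3 / α) :=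
        norm_intervalSum_le_norm_gaussianSmoothedSum (fun n ↦ (norm_quadPhase α β n).le) hα hα1 hAB
    _ ≤ √α * (√(α * √2) * (‖R‖ + 5) / (α * √(α * √2)) + 3 / α) := by
        rw [norm_gaussianSmoothedSum_quadPhase hα]
        gcongr
    _ = (‖R‖ + 8) / √α := by
        have hsq := sq_sqrt hα.le
        field_simp
        rw [hsq]
        ring

/-- The sums of the phases `quadPhase α β` over real intervals of length at most `L` are bounded
by `C`, uniformly in the linear coefficient `β` and in the position of the interval. -/
def QuadSumBound (α L C : ℝ) : Prop :=
  ∀ β A B : ℝ, A ≤ B → B - A ≤ L → ‖intervalSum (quadPhase α β) A B‖ ≤ C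

namespace QuadSumBound

variable {α L C : ℝ}

lemma trivial (α L : ℝ) : QuadSumBound α L (L + 1) := fun β _ _ hAB hL ↦
  (norm_intervalSum_le (fun n ↦ (norm_quadPhase α β n).le) hAB).trans (by gcongr)

lemma mono {C' : ℝ} (h : QuadSumBound α L C) (hC : C ≤ C') : QuadSumBound α L C' :=
  fun β A B hAB hL ↦ (h β A B hAB hL).trans hC

lemma add_intCast (h : QuadSumBound α L C) (k : ℤ) : QuadSumBound (α + k) L C := by
  intro β A B hAB hL
  simpa only [intervalSum, quadPhase_add_intCast] using h (β + k / 2) A B hAB hL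

lemma neg (h : QuadSumBound α L C) : QuadSumBound (-α) L C := by
  intro β A B hAB hL
  simpa only [intervalSum, quadPhase_neg, ← map_sum, RCLike.norm_conj] using h (-β) A B hAB hL

lemma inversion (hα : 0 < α) (hα1 : α ≤ 1) (h : QuadSumBound (1 / α) (α * L) C) :
    QuadSumBound α L ((C + 8) / √α) := by
  intro β A B hAB hL
  refine (norm_intervalSum_quadPhase_le_dual hα hα1 β hAB).trans ?_
  gcongr
  refine h.neg _ _ _ (by gcongr) ?_
  calc α * B + β - (α * A + β) = α * (B - A) := by ring
    _ ≤ α * L := by gcongr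

end QuadSumBound

-- Since `√(t / q) ≤ 3 / 4`, the error `8` of the inversion is absorbed by `32 = 4 * 8`, and
-- `34 = 32 + 2` accommodates the trivial bound `q + 1` at `t = 0`.
lemma quadSumBound_natCast_div_of_inverse {t q : ℕ} (hq : 0 < q) (htq : 2 * t ≤ q)
    (h : 0 < t → QuadSumBound (q / t) t (34 * √(q.gcd t * t) - 32)) :
    QuadSumBound (t / q) q (34 * √(t.gcd q * q) - 32) := by
  have hq' : (1 : ℝ) ≤ q := by exact_mod_cast hq
  rcases t.eq_zero_or_pos with rfl | ht
  · refine (QuadSumBound.trivial _ _).mono ?_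
    rw [Nat.gcd_zero_left, sqrt_mul_self (by positivity)]
    linarith
  have ht' : (0 : ℝ) < t := by exact_mod_cast ht
  have htq' : 2 * (t : ℝ) ≤ q := by exact_mod_cast htq
  have hinv : QuadSumBound (1 / (t / q)) (t / q * q) (34 * √(t.gcd q * t) - 32) := by
    rw [one_div_div, div_mul_cancel₀ _ (by positivity), Nat.gcd_comm]
    exact h ht
  refine (hinv.inversion (by positivity) ((div_le_one (by positivity)).2 (by linarith))).mono ?_
  rw [div_le_iff₀ (by positivity)]
  have hgcd : √(t.gcd q * q) * √(t / q) = √((t.gcd q : ℝ) * t) := by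
    rw [← sqrt_mul (by positivity)]
    congr 1
    field_simp
  have hratio : √((t : ℝ) / q) ≤ 3 / 4 := by
    rw [sqrt_le_left (by norm_num), div_le_iff₀ (by positivity)]
    linarith
  linarith

theorem quadSumBound_intCast_div {q : ℕ} (hq : 0 < q) (r : ℤ) :
    QuadSumBound (r / q) q (34 * √(r.gcd q * q) - 32) := by
  induction q using Nat.strong_induction_on generalizing r with
  | _ q ih =>
  have hmod : r.bmod q + q * r.bdiv q = r := Int.bmod_add_bdiv r q
  have hlt := Int.bmod_lt (x := r) hq
  have hle := Int.le_bmod (x := r) hq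
  generalize r.bmod q = s, r.bdiv q = k at hmod hlt hle
  have hshift : (r / q : ℝ) = s / q + k := by
    rw [← hmod]
    push_cast
    field_simp
  have hnat (t : ℕ) (ht : 2 * t ≤ q) : QuadSumBound (t / q) q (34 * √(t.gcd q * q) - 32) :=
    quadSumBound_natCast_div_of_inverse hq ht fun htpos ↦ by
      simpa only [Int.cast_natCast, Int.gcd_natCast_natCast] using ih t (by omega) htpos q
  rw [hshift, ← hmod, Int.gcd_add_mul_left_left]
  refine .add_intCast ?_ k
  obtain ⟨t, rfl | rfl⟩ := s.eq_nat_or_neg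
  · simpa using hnat t (by omega)
  · simpa [neg_div] using (hnat t (by omega)).neg

lemma norm_sum_range_smul_le {𝕜 E : Type*} [SeminormedRing 𝕜] [SeminormedAddCommGroup E]
    [Module 𝕜 E] [IsBoundedSMul 𝕜 E] (f : ℕ → 𝕜) {g : ℕ → E} {n : ℕ} {C : ℝ}
    (hg : ∀ k ≤ n, ‖∑ i ∈ range k, g i‖ ≤ C) :
    ‖∑ i ∈ range n, f i • g i‖ ≤
      (‖f (n - 1)‖ + ∑ i ∈ range (n - 1), ‖f (i + 1) - f i‖) * C := by
  rw [sum_range_by_parts, add_mul, sum_mul]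
  refine norm_sub_le_of_le ?_ (norm_sum_le_of_le _ fun i hi ↦ ?_)
  · exact (norm_smul_le _ _).trans (by gcongr; exact hg n le_rfl)
  · exact (norm_smul_le _ _).trans (by gcongr; exact hg (i + 1) (by grind))

/-- The Weyl sum `∑_{0 ≤ k < K} e(α k² / 2 + β k)`. Starting at `0` loses nothing, since a shift of
the summation range only changes `β` and a unimodular factor. -/
noncomputable def weylSum (α β : ℝ) (K : ℕ) : ℂ := ∑ k ∈ range K, quadPhase α β k

lemma quadPhase_intCast_add (α β : ℝ) (m n : ℤ) :
    quadPhase α β (m + n) = quadPhase α β m * quadPhase α (β + α * m) n := by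
  rw [quadPhase, quadPhase, quadPhase, ← Circle.coe_mul, ← AddChar.map_add_eq_mul]
  congr 2
  push_cast
  ring

lemma norm_sum_quadPhase_add (α β : ℝ) (m : ℤ) (K : ℕ) :
    ‖∑ k ∈ range K, quadPhase α β (m + k)‖ = ‖weylSum α (β + α * m) K‖ := by
  simp_rw [quadPhase_intCast_add]
  rw [← mul_sum, norm_mul, norm_quadPhase, one_mul, weylSum]

lemma norm_weylSum_add_le (α β : ℝ) (K L : ℕ) :
    ‖weylSum α β (K + L)‖ ≤ ‖weylSum α β K‖ + ‖weylSum α (β + α * K) L‖ := by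
  have hshift := norm_sum_quadPhase_add α β K L
  rw [Int.cast_natCast] at hshift
  rw [← hshift, weylSum, sum_range_add]
  push_cast
  exact norm_add_le _ _

lemma norm_weylSum_succ_le_of_forall_le {α C : ℝ} {L : ℕ} (hL : 0 < L)
    (hC : ∀ β, ∀ K ≤ L, ‖weylSum α β K‖ ≤ C) (β : ℝ) (K : ℕ) :
    ‖weylSum α β (K + 1)‖ ≤ (K / L + 1) * C := by
  induction K using Nat.strong_induction_on generalizing β with
  | _ K ih =>
  rcases lt_or_ge K L with hKL | hLK
  · have hC0 : 0 ≤ C := (norm_nonneg _).trans (hC 0 0 L.zero_le)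
    exact (hC β _ hKL).trans (le_mul_of_one_le_left hC0 (le_add_of_nonneg_left (by positivity)))
  · obtain ⟨K, rfl⟩ := Nat.exists_eq_add_of_le hLK
    calc ‖weylSum α β (L + K + 1)‖
      _ ≤ ‖weylSum α β L‖ + ‖weylSum α (β + α * L) (K + 1)‖ := norm_weylSum_add_le α β L (K + 1)
      _ ≤ C + (K / L + 1) * C := add_le_add (hC β L le_rfl) (ih K (by omega) _)
      _ = ((L + K : ℕ) / L + 1) * C := by
          push_cast
          field_simp
          ring

lemma QuadSumBound.norm_weylSum_le {α L C : ℝ} (h : QuadSumBound α L C) (β : ℝ) {K : ℕ}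
    (hK : K ≤ L) : ‖weylSum α β K‖ ≤ C := by
  rw [weylSum, sum_range_eq_intervalSum]
  exact h β _ _ (by linarith [K.cast_nonneg (α := ℝ)]) (by linarith)

lemma QuadSumBound.norm_weylSum_add_left_le {α L C : ℝ} (h : QuadSumBound α L C) (ε β : ℝ) {K : ℕ}
    (hK : K ≤ L) : ‖weylSum (α + ε) β K‖ ≤ (1 + 2 * π * |ε| * L ^ 2) * C := by
  have hphase (k : ℕ) :
      quadPhase (α + ε) β k = (𝐞 (ε * k ^ 2 / 2) : ℂ) • quadPhase α β k := by
    rw [quadPhase, quadPhase, smul_eq_mul, ← Circle.coe_mul, ← AddChar.map_add_eq_mul]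
    congr 2
    push_cast
    ring
  have hvar (k : ℕ) (hk : k ∈ range (K - 1)) :
      ‖(𝐞 (ε * (k + 1 : ℕ) ^ 2 / 2) - 𝐞 (ε * k ^ 2 / 2) : ℂ)‖ ≤ 2 * π * |ε| * L := by
    have hkK : k + 1 ≤ K := by grind
    have hkL : (k : ℝ) + 1 ≤ L := le_trans (by exact_mod_cast hkK) hK
    refine (norm_fourierChar_sub_le _ _).trans ?_
    rw [mul_assoc _ |ε|, show ε * (k + 1 : ℕ) ^ 2 / 2 - ε * k ^ 2 / 2 = ε * (k + 1 / 2) by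
      push_cast; ring, abs_mul, abs_of_nonneg (a := (k : ℝ) + 1 / 2) (by positivity)]
    gcongr
    linarith
  have hC0 : 0 ≤ C := (norm_nonneg _).trans (h.norm_weylSum_le 0 (K := K) hK)
  have hL : 0 ≤ L := K.cast_nonneg.trans hK
  simp_rw [weylSum, hphase]
  refine (norm_sum_range_smul_le _ fun k hk ↦ h.norm_weylSum_le β ?_).trans ?_
  · exact le_trans (by exact_mod_cast hk) hK
  gcongr
  · exact (Circle.norm_coe _).le
  calc _ ≤ ∑ k ∈ range (K - 1), 2 * π * |ε| * L := sum_le_sum hvar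
    _ = (K - 1 : ℕ) * (2 * π * |ε| * L) := by rw [sum_const, card_range, nsmul_eq_mul]
    _ ≤ L * (2 * π * |ε| * L) := by
        gcongr
        exact le_trans (by exact_mod_cast K.sub_le 1) hK
    _ = 2 * π * |ε| * L ^ 2 := by ring

theorem norm_weylSum_succ_le (α β : ℝ) (r : ℤ) {q : ℕ} (hq : 0 < q) (K : ℕ) :
    ‖weylSum α β (K + 1)‖ ≤
      34 * √(r.gcd q) * (1 + 2 * π * |α - r / q| * q ^ 2) * (K / √q + √q) := by
  have hblock : QuadSumBound (r / q) q (34 * √(r.gcd q * q)) :=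
    (quadSumBound_intCast_div hq r).mono (by linarith)
  have hnear (β : ℝ) (L : ℕ) (hL : L ≤ q) := hblock.norm_weylSum_add_left_le (α - r / q) β
    (K := L) (by exact_mod_cast hL)
  simp only [add_sub_cancel] at hnear
  refine (norm_weylSum_succ_le_of_forall_le hq hnear β K).trans_eq ?_
  have hsq : √(q : ℝ) ^ 2 = q := sq_sqrt q.cast_nonneg
  have hsplit : (K / q + 1) * √(q : ℝ) = K / √q + √q := by
    field_simp
    rw [hsq]
    ring
  rw [sqrt_mul (by positivity), ← hsplit]
  ring

lemma exp_eq_quadPhase (a b : ℝ) (n : ℤ) :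
    Complex.exp (2 * π * Complex.I * (a * n ^ 2 + b * n)) = quadPhase (2 * a) b n := by
  rw [quadPhase, fourierChar_apply]
  congr 1
  push_cast
  ring

theorem weyl_sum_estimate_general (a b : ℝ) (p : ℤ) {q : ℕ} (hq : 0 < q) {M N : ℤ}
    (hMN : M ≤ N) :
    ‖∑ n ∈ Icc M N, Complex.exp (2 * π * Complex.I * (a * n ^ 2 + b * n))‖ ≤
      136 * √2 * π * √(p.gcd q) * (1 + q ^ 2 * |a - p / q|) * ((N - M) / √q + √q) := by
  obtain ⟨K, rfl⟩ := Int.le.dest hMN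
  have hIcc : (M + K + 1 - M).toNat = K + 1 := by omega
  have hsum : ‖∑ n ∈ Icc M (M + K), Complex.exp (2 * π * Complex.I * (a * n ^ 2 + b * n))‖ =
      ‖weylSum (2 * a) (b + 2 * a * M) (K + 1)‖ := by
    simp_rw [exp_eq_quadPhase, Int.Icc_eq_finset_map, sum_map, hIcc]
    exact norm_sum_quadPhase_add _ _ _ _
  have hgcd : √((2 * p).gcd q : ℝ) ≤ √2 * √(p.gcd q) := by
    rw [← sqrt_mul zero_le_two]
    gcongr
    have hpos : 0 < p.gcd q := Int.gcd_pos_of_ne_zero_right _ (by exact_mod_cast hq.ne')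
    have hdvd : (2 * p).gcd q ∣ 2 * p.gcd q :=
      Int.gcd_mul_left 2 p q ▸ Int.gcd_dvd_gcd_mul_left_right _ _ _
    exact_mod_cast Nat.le_of_dvd (mul_pos two_pos hpos) hdvd
  have hdist : 1 + 2 * π * |2 * a - (2 * p : ℤ) / q| * q ^ 2 ≤
      4 * π * (1 + q ^ 2 * |a - p / q|) := by
    rw [show 2 * a - (2 * p : ℤ) / q = 2 * (a - p / q) by push_cast; ring, abs_mul, abs_two]
    linarith [pi_gt_three]
  rw [hsum]
  calc _ ≤ _ := norm_weylSum_succ_le _ _ (2 * p) hq K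
    _ ≤ 34 * (√2 * √(p.gcd q)) * (4 * π * (1 + q ^ 2 * |a - p / q|)) * (K / √q + √q) := by
      gcongr
    _ = _ := by
      push_cast
      ring

/-- (Weyl-sum estimate.) There is an absolute constant `c₁ > 0` such that for
every real `a`, every irreducible fraction `p/q` with `q ≥ 1` and `|a - p/q| ≤ 1/q²`, every
`b ∈ ℝ` and all integers `0 < M < N`,
`|Σ_{n=M}^{N} e^{2πi(an² + bn)}| ≤ c₁((N-M)/√q + √q)`. -/
theorem weyl_sum_estimate :
    ∃ c₁ : ℝ, 0 < c₁ ∧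
      ∀ (a b : ℝ) (p : ℤ) (q : ℕ), 0 < q → Nat.Coprime p.natAbs q →
        |a - (p : ℝ) / q| ≤ 1 / (q : ℝ) ^ 2 →
        ∀ M N : ℕ, 0 < M → M < N →
          ‖∑ n ∈ Icc M N, Complex.exp (2 * π * Complex.I * (a * n ^ 2 + b * n))‖ ≤
            c₁ * (((N : ℝ) - M) / Real.sqrt q + Real.sqrt q) := by
  refine ⟨136 * √2 * π * 2, by positivity, fun a b p q hq hpq ha M N _ hMN ↦ ?_⟩
  have hMN' : (M : ℝ) ≤ N := by exact_mod_cast hMN.le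
  have hgcd : p.gcd q = 1 := hpq
  have hdist : 1 + (q : ℝ) ^ 2 * |a - p / q| ≤ 2 := by
    linarith [(le_div_iff₀' (by positivity)).1 ha]
  have hIcc : (Icc M N).map Nat.castEmbedding = Icc (M : ℤ) N :=
    coe_injective (by simpa using Nat.image_cast_int_Icc M N)
  have hsum := weyl_sum_estimate_general a b p hq (Int.ofNat_le.2 hMN.le)
  rw [← hIcc, sum_map, hgcd] at hsum
  simp only [Int.cast_natCast, Nat.cast_one, sqrt_one, mul_one] at hsum
  refine hsum.trans ?_
  gcongr
end

section
/- Suppose a > 0 is real and there exists c₁ > 0 and, for every real δ > 0, a sequence of irreducible fractions p_j/q_j with |a - p_j/q_j| ≤ 1/q_j² and 2^{j(1-δ)} ≤ q_j ≤ 2^{j(1+δ)} for all sufficiently large j. Then, with t = 2πa, for each δ > 0 there exists C > 0 such that sup_{x∈ℝ} |Σ_{n=2^{j-1}}^{2^{j+1}} χ_j(n) e^{in²t + inx}| ≤ C · 2^{(j/2)(1+δ)} for all j ≥ 1, where χ_j(ξ) = χ(2^{-j}ξ) and χ : ℝ → [0,1] is a fixed smooth function supported in [1/2, 2]. -/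
open Real Finset Set

/-!
Write `e(y) = exp(2πiy)`. Weyl differencing bounds the square of a quadratic exponential sum of
length `M` by `M` plus twice a sum over `h < M` of geometric sums of ratio `e(2(h + 1)a)`, each at
most `min(M, 1 / (2‖2(h + 1)a‖))`, where `‖·‖` is the distance to the nearest integer. If
`|a - p/q| ≤ 1/q²` in lowest terms, then the points `ka`, with `k` in a window of length about
`q/2`, are `1/(2q)`-separated modulo one, so each window contributes `O(M + q log q)`. For `M` of
size `2^j` and `2^(j(1-ε)) ≤ q ≤ 2^(j(1+ε))` there are `O(2^(jε))` windows, and the square of the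
exponential sum is `O(2^(j(1+3ε)))`, uniformly in the lower-order coefficients. Summation by parts
then inserts the weight `χ(2^(-j)n)`, at the cost of a factor governed by its total variation.
-/

open scoped FourierTransform InnerProductSpace

section Differencing

lemma norm_sq_sum_range_eq_sum_inner_shift {𝕜 E : Type*} [RCLike 𝕜] [SeminormedAddCommGroup E]
    [InnerProductSpace 𝕜 E] (z : ℕ → E) (M : ℕ) :
    ‖∑ n ∈ range M, z n‖ ^ 2 = ∑ n ∈ range M, ‖z n‖ ^ 2 + 2 * RCLike.re
      (∑ h ∈ range M, ∑ n ∈ range (M - (h + 1)), ⟪z n, z (n + (h + 1))⟫_𝕜) := by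
  induction M with
  | zero => simp
  | succ M ih =>
    have new_pairs : ∑ h ∈ range (M + 1), ∑ n ∈ range (M + 1 - (h + 1)),
          ⟪z n, z (n + (h + 1))⟫_𝕜 =
        ∑ h ∈ range M, ∑ n ∈ range (M - (h + 1)), ⟪z n, z (n + (h + 1))⟫_𝕜
          + ⟪∑ n ∈ range M, z n, z M⟫_𝕜 := by
      rw [sum_range_succ, Nat.sub_self, Finset.range_zero, sum_empty, add_zero,
        ← sum_range_reflect z M, sum_inner, ← sum_add_distrib]
      refine sum_congr rfl fun h hh ↦ ?_
      have hhM : h < M := Finset.mem_range.1 hh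
      rw [show M + 1 - (h + 1) = M - (h + 1) + 1 by omega, sum_range_succ,
        show M - (h + 1) + (h + 1) = M by omega, show M - (h + 1) = M - 1 - h by omega]
    rw [new_pairs, sum_range_succ z, norm_add_sq (𝕜 := 𝕜), ih, map_add,
      sum_range_succ fun n ↦ ‖z n‖ ^ 2]
    ring

/-- The Weyl sum of the real quadratic polynomial `a X² + b X + c` over the first `M` naturals. -/
noncomputable def quadraticWeylSum (a b c : ℝ) (M : ℕ) : ℂ :=
  ∑ n ∈ range M, (𝐞 (a * n ^ 2 + b * n + c) : ℂ)

lemma norm_quadraticWeylSum_le (a b c : ℝ) (M : ℕ) : ‖quadraticWeylSum a b c M‖ ≤ M := by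
  rw [quadraticWeylSum]
  refine (norm_sum_le _ _).trans_eq ?_
  simp only [Circle.norm_coe, sum_const, card_range, nsmul_eq_mul, mul_one]

lemma inner_fourierChar (x y : ℝ) : ⟪(𝐞 x : ℂ), (𝐞 y : ℂ)⟫_ℂ = 𝐞 (y - x) := by
  rw [RCLike.inner_apply, ← Circle.coe_inv_eq_conj, ← Circle.coe_mul, ← AddChar.map_neg_eq_inv,
    ← AddChar.map_add_eq_mul, sub_eq_add_neg]

lemma norm_sq_quadraticWeylSum_le_sum_norm (a b c : ℝ) (M : ℕ) :
    ‖quadraticWeylSum a b c M‖ ^ 2 ≤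
      M + 2 * ∑ h ∈ range M,
        ‖∑ n ∈ range (M - (h + 1)), (𝐞 ((2 * (h + 1) : ℕ) * a * n) : ℂ)‖ := by
  have inner_shift (h n : ℕ) :
      ⟪(𝐞 (a * n ^ 2 + b * n + c) : ℂ),
          (𝐞 (a * (n + (h + 1) : ℕ) ^ 2 + b * (n + (h + 1) : ℕ) + c) : ℂ)⟫_ℂ =
        𝐞 (a * (h + 1) ^ 2 + b * (h + 1)) * 𝐞 ((2 * (h + 1) : ℕ) * a * n) := by
    rw [inner_fourierChar, ← Circle.coe_mul, ← AddChar.map_add_eq_mul]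
    congr 2
    push_cast
    ring
  rw [quadraticWeylSum, norm_sq_sum_range_eq_sum_inner_shift (𝕜 := ℂ)]
  simp only [inner_shift, ← mul_sum, Circle.norm_coe, one_pow, sum_const, card_range, nsmul_eq_mul,
    mul_one]
  gcongr
  refine (RCLike.re_le_norm _).trans ((norm_sum_le _ _).trans_eq ?_)
  simp only [norm_mul, Circle.norm_coe, one_mul]

end Differencing

section CircleDistance

lemma four_mul_norm_coe_le_norm_fourierChar_sub_one (y : ℝ) :
    4 * ‖(y : UnitAddCircle)‖ ≤ ‖(𝐞 y : ℂ) - 1‖ := by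
  set d : ℝ := y - round y with hd
  have periodic : (𝐞 y : ℂ) = Complex.exp (Complex.I * (2 * π * d : ℝ)) := by
    rw [Real.fourierChar_apply, Complex.exp_eq_exp_iff_exists_int]
    refine ⟨round y, ?_⟩
    push_cast [hd]
    ring
  have jordan : 2 / π * |π * d| ≤ |sin (π * d)| := by
    refine mul_abs_le_abs_sin ?_
    rw [abs_mul, abs_of_pos pi_pos]
    linarith [mul_le_mul_of_nonneg_left (abs_sub_round y) pi_pos.le]
  calc 4 * ‖(y : UnitAddCircle)‖ = 2 * (2 / π * |π * d|) := by
        rw [UnitAddCircle.norm_eq, ← hd, abs_mul, abs_of_pos pi_pos]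
        field_simp
        ring
    _ ≤ 2 * |sin (π * d)| := by gcongr
    _ = ‖(𝐞 y : ℂ) - 1‖ := by
        rw [periodic, Complex.norm_exp_I_mul_ofReal_sub_one, norm_mul, Real.norm_ofNat,
          Real.norm_eq_abs, mul_assoc 2 π, mul_div_cancel_left₀ _ two_ne_zero]

lemma norm_sum_fourierChar_mul_norm_coe_le_one (y : ℝ) (K : ℕ) :
    ‖∑ n ∈ range K, (𝐞 (y * n) : ℂ)‖ * (2 * ‖(y : UnitAddCircle)‖) ≤ 1 := by
  have hpow (n : ℕ) : (𝐞 (y * n) : ℂ) = (𝐞 y : ℂ) ^ n := by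
    rw [mul_comm, ← nsmul_eq_mul, AddChar.map_nsmul_eq_pow, Circle.coe_pow]
  have htelescope : ‖∑ n ∈ range K, (𝐞 (y * n) : ℂ)‖ * ‖(𝐞 y : ℂ) - 1‖ ≤ 2 := by
    simp only [hpow]
    rw [← norm_mul, geom_sum_mul]
    refine (norm_sub_le _ _).trans_eq ?_
    rw [norm_pow, Circle.norm_coe, one_pow, norm_one, one_add_one_eq_two]
  have hchord := mul_le_mul_of_nonneg_left (four_mul_norm_coe_le_norm_fourierChar_sub_one y)
    (norm_nonneg (∑ n ∈ range K, (𝐞 (y * n) : ℂ)))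
  linarith

lemma one_div_den_le_norm_coe_mul_rat {r : ℚ} {d : ℤ} (hd : ¬ (r.den : ℤ) ∣ d) :
    1 / (r.den : ℝ) ≤ ‖((d * r : ℝ) : UnitAddCircle)‖ := by
  have hq : (0 : ℝ) < r.den := mod_cast r.den_pos
  rw [UnitAddCircle.norm_eq]
  set n : ℤ := round (d * r : ℝ)
  have hne : d * r.num - n * r.den ≠ 0 := fun h ↦ hd <|
    IsCoprime.dvd_of_dvd_mul_right (Rat.isCoprime_num_den r).symm ⟨n, by linarith⟩
  have hscaled : (d * r - n : ℝ) * r.den = (d * r.num - n * r.den : ℤ) := by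
    rw [Rat.cast_def r]
    push_cast
    field_simp
  have hone : (1 : ℝ) ≤ |((d * r.num - n * r.den : ℤ) : ℝ)| := mod_cast Int.one_le_abs hne
  rwa [← hscaled, abs_mul, abs_of_pos hq, ← div_le_iff₀ hq] at hone

lemma one_div_two_mul_den_le_norm_coe_mul {a : ℝ} {r : ℚ} (hr : |a - r| ≤ 1 / (r.den : ℝ) ^ 2)
    {d : ℤ} (hd0 : d ≠ 0) (hd : 2 * |d| ≤ r.den) :
    1 / (2 * r.den : ℝ) ≤ ‖((d * a : ℝ) : UnitAddCircle)‖ := by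
  have hndvd : ¬ (r.den : ℤ) ∣ d := fun h ↦ by
    have := Int.le_of_dvd (abs_pos.2 hd0) ((dvd_abs _ _).2 h)
    have := abs_pos.2 hd0
    omega
  have hperturb : ‖((d * (r - a) : ℝ) : UnitAddCircle)‖ ≤ 1 / (2 * r.den : ℝ) := by
    have hd' : 2 * |(d : ℝ)| ≤ r.den := mod_cast hd
    calc ‖((d * (r - a) : ℝ) : UnitAddCircle)‖ ≤ |d * (r - a)| := by
          rw [← Real.norm_eq_abs]
          exact QuotientAddGroup.norm_mk_le_norm
      _ = |(d : ℝ)| * |a - r| := by rw [abs_mul, abs_sub_comm]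
      _ ≤ r.den / 2 * (1 / (r.den : ℝ) ^ 2) := by gcongr; linarith
      _ = 1 / (2 * r.den : ℝ) := by field_simp
  have htriangle : ‖((d * r : ℝ) : UnitAddCircle)‖ ≤
      ‖((d * a : ℝ) : UnitAddCircle)‖ + ‖((d * (r - a) : ℝ) : UnitAddCircle)‖ := by
    rw [show (d * r : ℝ) = d * a + d * (r - a) by ring, AddCircle.coe_add]
    exact norm_add_le _ _
  have hhalves : 1 / (r.den : ℝ) = 1 / (2 * r.den : ℝ) + 1 / (2 * r.den : ℝ) := by
    field_simp; norm_num
  linarith [one_div_den_le_norm_coe_mul_rat hndvd]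

end CircleDistance

section SeparatedPoints

/-- The index of the arc `[m / D, (m + 1) / D)` of the circle `ℝ / ℤ` that contains `y`. -/
noncomputable def arcIndex (D : ℕ) (y : ℝ) : ℕ := ⌊D * Int.fract y⌋₊

/-- An upper bound for `min M (1 / (2 * ρ))` valid for all `ρ ≥ m / D`. The case `m = 0` is split
off because there `D / (2 * m)` is `0` instead of `∞`. -/
noncomputable def arcMajorant (M : ℝ) (D m : ℕ) : ℝ := if m = 0 then M else D / (2 * m)

lemma arcIndex_le (D : ℕ) (y : ℝ) : (arcIndex D y : ℝ) ≤ D * Int.fract y :=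
  Nat.floor_le (mul_nonneg D.cast_nonneg (Int.fract_nonneg y))

lemma lt_arcIndex_add_one (D : ℕ) (y : ℝ) : D * Int.fract y < arcIndex D y + 1 :=
  Nat.lt_floor_add_one _

lemma arcIndex_lt {D : ℕ} (hD : 0 < D) (y : ℝ) : arcIndex D y < D := by
  have hD' : (0 : ℝ) < D := mod_cast hD
  have : (arcIndex D y : ℝ) < D :=
    (arcIndex_le D y).trans_lt (mul_lt_of_lt_one_right hD' (Int.fract_lt_one y))
  exact_mod_cast this

lemma norm_coe_sub_lt_of_arcIndex_eq {D : ℕ} (hD : 0 < D) {y y' : ℝ}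
    (h : arcIndex D y = arcIndex D y') : ‖((y - y' : ℝ) : UnitAddCircle)‖ < 1 / D := by
  have hD' : (0 : ℝ) < D := mod_cast hD
  have hfract : |Int.fract y - Int.fract y'| < 1 / D := by
    have hy := arcIndex_le D y
    have hy_lt := lt_arcIndex_add_one D y
    have hy' := arcIndex_le D y'
    have hy'_lt := lt_arcIndex_add_one D y'
    rw [h] at hy hy_lt
    rw [abs_lt, ← neg_div, div_lt_iff₀ hD', lt_div_iff₀ hD']
    constructor <;> linarith
  calc ‖((y - y' : ℝ) : UnitAddCircle)‖ = |y - y' - round (y - y')| := UnitAddCircle.norm_eq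
    _ ≤ |y - y' - (⌊y⌋ - ⌊y'⌋ : ℤ)| := round_le _ _
    _ = |Int.fract y - Int.fract y'| := by
        rw [← Int.self_sub_floor, ← Int.self_sub_floor]
        push_cast
        ring_nf
    _ < 1 / D := hfract

lemma arcMajorant_nonneg {M : ℝ} (hM : 0 ≤ M) (D m : ℕ) : 0 ≤ arcMajorant M D m := by
  rw [arcMajorant]
  split_ifs <;> positivity

lemma le_arcMajorant {M T ρ : ℝ} {D m : ℕ} (hT : 0 ≤ T) (hTM : T ≤ M) (hTρ : T * (2 * ρ) ≤ 1)
    (hm : m ≤ D * ρ) : T ≤ arcMajorant M D m := by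
  rw [arcMajorant]
  split_ifs with hm0
  · exact hTM
  · have hm_pos : (0 : ℝ) < m := mod_cast Nat.pos_of_ne_zero hm0
    rw [le_div_iff₀ (mul_pos two_pos hm_pos)]
    calc T * (2 * m) ≤ T * (2 * (D * ρ)) := by gcongr
      _ = D * (T * (2 * ρ)) := by ring
      _ ≤ D := mul_le_of_le_one_right D.cast_nonneg hTρ

lemma le_arcMajorant_add_arcMajorant {M T y : ℝ} {D : ℕ} (hD : 0 < D) (hT : 0 ≤ T) (hTM : T ≤ M)
    (hTy : T * (2 * ‖(y : UnitAddCircle)‖) ≤ 1) :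
    T ≤ arcMajorant M D (arcIndex D y) + arcMajorant M D (D - 1 - arcIndex D y) := by
  have hM : 0 ≤ M := hT.trans hTM
  rw [UnitAddCircle.norm_eq, abs_sub_round_eq_min] at hTy
  rcases le_total (Int.fract y) (1 - Int.fract y) with hy | hy
  · rw [min_eq_left hy] at hTy
    exact (le_arcMajorant hT hTM hTy (arcIndex_le D y)).trans
      (le_add_of_nonneg_right (arcMajorant_nonneg hM _ _))
  · rw [min_eq_right hy] at hTy
    refine (le_arcMajorant hT hTM hTy ?_).trans (le_add_of_nonneg_left (arcMajorant_nonneg hM _ _))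
    have hlt := arcIndex_lt hD y
    rw [Nat.cast_sub (by omega), Nat.cast_sub (by omega), Nat.cast_one]
    linarith [lt_arcIndex_add_one D y]

lemma sum_arcMajorant_le {M : ℝ} (hM : 0 ≤ M) (D : ℕ) :
    ∑ m ∈ range D, arcMajorant M D m ≤ M + D / 2 * (1 + log D) := by
  have hharmonic : ∑ m ∈ range D, arcMajorant M D m ≤ M + D / 2 * harmonic D := by
    rcases D with _ | s
    · simpa using hM
    have htail : ∑ m ∈ range s, arcMajorant M (s + 1) (m + 1) = (s + 1 : ℕ) / 2 * harmonic s := by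
      push_cast [harmonic, mul_sum]
      refine sum_congr rfl fun m _ ↦ ?_
      rw [arcMajorant, if_neg m.succ_ne_zero]
      push_cast
      field_simp
    have hmono : (harmonic s : ℝ) ≤ harmonic (s + 1) := by
      rw [harmonic_succ]
      push_cast
      exact le_add_of_nonneg_right (by positivity)
    rw [sum_range_succ', htail, arcMajorant, if_pos rfl, add_comm]
    gcongr
  refine hharmonic.trans ?_
  gcongr
  exact harmonic_le_one_add_log D

lemma sum_le_of_separated {ι : Type*} {s : Finset ι} {f θ : ι → ℝ} {M : ℝ} {D : ℕ} (hM : 0 ≤ M)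
    (hD : 0 < D) (hf0 : ∀ i ∈ s, 0 ≤ f i) (hfM : ∀ i ∈ s, f i ≤ M)
    (hfθ : ∀ i ∈ s, f i * (2 * ‖(θ i : UnitAddCircle)‖) ≤ 1)
    (hsep : ∀ i ∈ s, ∀ j ∈ s, i ≠ j → 1 / (D : ℝ) ≤ ‖((θ i - θ j : ℝ) : UnitAddCircle)‖) :
    ∑ i ∈ s, f i ≤ 2 * M + D * (1 + log D) := by
  have hinj : Set.InjOn (fun i ↦ arcIndex D (θ i)) (s : Set ι) := fun i hi j hj hij ↦ by
    by_contra hne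
    exact (hsep i hi j hj hne).not_gt (norm_coe_sub_lt_of_arcIndex_eq hD hij)
  calc ∑ i ∈ s, f i
      ≤ ∑ i ∈ s, (arcMajorant M D (arcIndex D (θ i))
          + arcMajorant M D (D - 1 - arcIndex D (θ i))) :=
        sum_le_sum fun i hi ↦
          le_arcMajorant_add_arcMajorant hD (hf0 i hi) (hfM i hi) (hfθ i hi)
    _ = ∑ m ∈ s.image fun i ↦ arcIndex D (θ i),
          (arcMajorant M D m + arcMajorant M D (D - 1 - m)) := by
        rw [sum_image hinj]
    _ ≤ ∑ m ∈ range D, (arcMajorant M D m + arcMajorant M D (D - 1 - m)) := by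
        refine sum_le_sum_of_subset_of_nonneg (fun m hm ↦ ?_) fun m _ _ ↦
          add_nonneg (arcMajorant_nonneg hM _ _) (arcMajorant_nonneg hM _ _)
        obtain ⟨i, -, rfl⟩ := Finset.mem_image.1 hm
        exact Finset.mem_range.2 (arcIndex_lt hD _)
    _ = 2 * ∑ m ∈ range D, arcMajorant M D m := by
        rw [sum_add_distrib, sum_range_reflect, two_mul]
    _ ≤ 2 * M + D * (1 + log D) := by linarith [sum_arcMajorant_le hM D]

variable {ι : Type*} {s : Finset ι} {f : ι → ℝ} {k : ι → ℕ} {a M : ℝ} {r : ℚ}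

lemma sum_le_of_rat_approx_of_short (hr : |a - r| ≤ 1 / (r.den : ℝ) ^ 2) (hM : 0 ≤ M)
    (hk : Set.InjOn k s) (hshort : ∀ i ∈ s, ∀ j ∈ s, 2 * |(k i : ℤ) - k j| ≤ r.den)
    (hf0 : ∀ i ∈ s, 0 ≤ f i) (hfM : ∀ i ∈ s, f i ≤ M)
    (hfk : ∀ i ∈ s, f i * (2 * ‖((k i * a : ℝ) : UnitAddCircle)‖) ≤ 1) :
    ∑ i ∈ s, f i ≤ 2 * (M + r.den * (1 + log (2 * r.den))) := by
  have hsep : ∀ i ∈ s, ∀ j ∈ s, i ≠ j →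
      1 / ((2 * r.den : ℕ) : ℝ) ≤ ‖((k i * a - k j * a : ℝ) : UnitAddCircle)‖ := by
    intro i hi j hj hij
    have hne : (k i : ℤ) - k j ≠ 0 := sub_ne_zero.2 fun h ↦ hij (hk hi hj (mod_cast h))
    simpa [sub_mul] using one_div_two_mul_den_le_norm_coe_mul hr hne (hshort i hi j hj)
  have hsum := sum_le_of_separated hM (mul_pos two_pos r.den_pos) hf0 hfM hfk hsep
  push_cast at hsum
  linarith

lemma two_mul_abs_sub_le_of_div_eq {m n q : ℕ} (hq : 0 < q)
    (h : m / ((q + 1) / 2) = n / ((q + 1) / 2)) : 2 * |(m : ℤ) - n| ≤ q := by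
  have hL : 0 < (q + 1) / 2 := by omega
  have hm_div := Nat.div_add_mod m ((q + 1) / 2)
  have hn_div := Nat.div_add_mod n ((q + 1) / 2)
  have hm_mod := Nat.mod_lt m hL
  have hn_mod := Nat.mod_lt n hL
  rw [h] at hm_div
  rcases abs_cases ((m : ℤ) - n) with habs | habs <;> omega

lemma natCast_div_half_le {q : ℕ} (hq : 0 < q) (N : ℕ) :
    ((N / ((q + 1) / 2) : ℕ) : ℝ) ≤ 2 * N / q := by
  have hL : q ≤ 2 * ((q + 1) / 2) := by omega
  set L := (q + 1) / 2
  have hqL : (q : ℝ) ≤ 2 * L := mod_cast hL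
  calc ((N / L : ℕ) : ℝ) ≤ N / L := Nat.cast_div_le
    _ = 2 * N / (2 * L) := (mul_div_mul_left _ _ two_ne_zero).symm
    _ ≤ 2 * N / q := by gcongr

lemma sum_le_of_rat_approx {N : ℕ} (hr : |a - r| ≤ 1 / (r.den : ℝ) ^ 2) (hM : 0 ≤ M)
    (hk : Set.InjOn k s) (hkN : ∀ i ∈ s, k i < N)
    (hf0 : ∀ i ∈ s, 0 ≤ f i) (hfM : ∀ i ∈ s, f i ≤ M)
    (hfk : ∀ i ∈ s, f i * (2 * ‖((k i * a : ℝ) : UnitAddCircle)‖) ≤ 1) :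
    ∑ i ∈ s, f i ≤ (2 * N / r.den + 1) * (2 * (M + r.den * (1 + log (2 * r.den)))) := by
  have hq := r.den_pos
  set q := r.den
  set L := (q + 1) / 2
  have hblocks : ∀ i ∈ s, k i / L ∈ range (N / L + 1) := fun i hi ↦
    Finset.mem_range.2 (Nat.lt_succ_of_le (Nat.div_le_div_right (hkN i hi).le))
  have hblock (b : ℕ) :
      ∑ i ∈ s with k i / L = b, f i ≤ 2 * (M + q * (1 + log (2 * q))) := by
    have mem {i : ι} (hi : i ∈ s.filter fun i ↦ k i / L = b) : i ∈ s := (mem_filter.1 hi).1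
    refine sum_le_of_rat_approx_of_short hr hM (hk.mono fun i hi ↦ mem hi)
      (fun i hi j hj ↦ ?_) (fun i hi ↦ hf0 i (mem hi)) (fun i hi ↦ hfM i (mem hi))
      (fun i hi ↦ hfk i (mem hi))
    exact two_mul_abs_sub_le_of_div_eq hq
      ((mem_filter.1 hi).2.trans (mem_filter.1 hj).2.symm)
  have hcount : ((N / L + 1 : ℕ) : ℝ) ≤ 2 * N / q + 1 := by
    push_cast
    exact add_le_add_left (natCast_div_half_le hq N) 1
  have hlog : 0 ≤ log (2 * q : ℝ) := mod_cast log_natCast_nonneg (2 * q)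
  calc ∑ i ∈ s, f i
      = ∑ b ∈ range (N / L + 1), ∑ i ∈ s with k i / L = b, f i :=
        (sum_fiberwise_of_maps_to hblocks f).symm
    _ ≤ (N / L + 1 : ℕ) * (2 * (M + q * (1 + log (2 * q)))) := by
        simpa using sum_le_card_nsmul (range (N / L + 1)) _ _ fun b _ ↦ hblock b
    _ ≤ _ := by gcongr

end SeparatedPoints

section WeylInequality

theorem norm_sq_quadraticWeylSum_le {a : ℝ} {r : ℚ} (hr : |a - r| ≤ 1 / (r.den : ℝ) ^ 2)
    (b c : ℝ) (M : ℕ) :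
    ‖quadraticWeylSum a b c M‖ ^ 2 ≤
      M + 4 * ((2 * (2 * M + 1) / r.den + 1) * (M + r.den * (1 + log (2 * r.den)))) := by
  have hsum : ∑ h ∈ range M, ‖∑ n ∈ range (M - (h + 1)), (𝐞 ((2 * (h + 1) : ℕ) * a * n) : ℂ)‖ ≤
      (2 * (2 * M + 1 : ℕ) / r.den + 1) * (2 * (M + r.den * (1 + log (2 * r.den)))) := by
    refine sum_le_of_rat_approx (k := fun h ↦ 2 * (h + 1)) hr M.cast_nonneg
      (fun h _ h' _ hh' ↦ by simpa using hh') (fun h hh ↦ ?_) (fun h _ ↦ norm_nonneg _)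
      (fun h _ ↦ ?_) fun h _ ↦ norm_sum_fourierChar_mul_norm_coe_le_one _ _
    · have := Finset.mem_range.1 hh
      omega
    · refine (norm_sum_le _ _).trans ?_
      simp only [Circle.norm_coe, sum_const, card_range, nsmul_eq_mul, mul_one]
      exact_mod_cast Nat.sub_le _ _
  push_cast at hsum
  have hdiff := norm_sq_quadraticWeylSum_le_sum_norm a b c M
  push_cast at hdiff
  linarith

lemma one_add_log_two_mul_le_rpow {ε N q : ℝ} (hε : 0 < ε) (hN : 1 ≤ N) (hq : 0 < q)
    (hqN : q ≤ N ^ (1 + ε)) : 1 + log (2 * q) ≤ (2 + (1 + ε) / ε) * N ^ ε := by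
  have hN0 : 0 < N := one_pos.trans_le hN
  have hlog_two : log 2 ≤ 1 := by linarith [log_two_lt_d9]
  have hNε : 1 ≤ N ^ ε := one_le_rpow hN hε.le
  calc 1 + log (2 * q) = 1 + log 2 + log q := by
        rw [log_mul two_ne_zero hq.ne', add_assoc]
    _ ≤ 1 + log 2 + (1 + ε) * log N := by
        rw [← log_rpow hN0]
        gcongr
    _ ≤ 2 + (1 + ε) * (N ^ ε / ε) := by
        gcongr
        · linarith
        · exact log_le_rpow_div hN0.le hε
    _ ≤ 2 * N ^ ε + (1 + ε) * (N ^ ε / ε) := by linarith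
    _ = (2 + (1 + ε) / ε) * N ^ ε := by ring

lemma exists_weyl_bound_le_rpow {ε : ℝ} (hε : 0 < ε) :
    ∃ C : ℝ, 0 < C ∧ ∀ M N q : ℝ, 0 ≤ M → 1 ≤ N → M ≤ 2 * N →
      N ^ (1 - ε) ≤ q → q ≤ N ^ (1 + ε) →
        M + 4 * ((2 * (2 * M + 1) / q + 1) * (M + q * (1 + log (2 * q)))) ≤
          C * N ^ (1 + 3 * ε) := by
  set c : ℝ := 2 + (1 + ε) / ε
  have : 0 < c := by positivity
  refine ⟨2 + 44 * (2 + c), by positivity, fun M N q hM hN hMN hNq hqN ↦ ?_⟩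
  have hN0 : 0 < N := one_pos.trans_le hN
  have hq : 0 < q := (rpow_pos_of_pos hN0 _).trans_le hNq
  set W : ℝ := N ^ ε with hW
  have hW1 : 1 ≤ W := one_le_rpow hN hε.le
  have hNqW : N ≤ q * W := by
    calc N = N ^ (1 - ε) * W := by rw [hW, ← rpow_add hN0, sub_add_cancel, rpow_one]
      _ ≤ q * W := by gcongr
  have hqNW : q ≤ N * W := by rwa [rpow_add hN0, rpow_one] at hqN
  have hblocks : 2 * (2 * M + 1) / q + 1 ≤ 11 * W := by
    have : 2 * (2 * M + 1) / q ≤ 10 * W := by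
      rw [div_le_iff₀ hq]
      linarith
    linarith
  have hblock : M + q * (1 + log (2 * q)) ≤ (2 + c) * (N * W ^ 2) := by
    have hlog : 1 + log (2 * q) ≤ c * W := one_add_log_two_mul_le_rpow hε hN hq hqN
    have hqlog : q * (1 + log (2 * q)) ≤ N * W * (c * W) :=
      (mul_le_mul_of_nonneg_left hlog hq.le).trans (by gcongr)
    calc M + q * (1 + log (2 * q)) ≤ 2 * N + N * W * (c * W) := add_le_add hMN hqlog
      _ = 2 * (N * 1) + c * (N * W ^ 2) := by ring
      _ ≤ 2 * (N * W ^ 2) + c * (N * W ^ 2) := by gcongr; exact one_le_pow₀ hW1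
      _ = (2 + c) * (N * W ^ 2) := by ring
  have hexponent : N ^ (1 + 3 * ε) = N * W ^ 3 := by
    rw [rpow_add hN0, rpow_one, mul_comm 3 ε, rpow_mul hN0.le, ← hW, ← rpow_natCast]
    norm_num
  have hproduct : (2 * (2 * M + 1) / q + 1) * (M + q * (1 + log (2 * q))) ≤
      11 * W * ((2 + c) * (N * W ^ 2)) :=
    (mul_le_mul_of_nonneg_left hblock (by positivity)).trans (by gcongr)
  calc M + 4 * ((2 * (2 * M + 1) / q + 1) * (M + q * (1 + log (2 * q))))
      ≤ 2 * N + 4 * (11 * W * ((2 + c) * (N * W ^ 2))) := by linarith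
    _ = 2 * (N * 1) + 44 * (2 + c) * (N * W ^ 3) := by ring
    _ ≤ 2 * (N * W ^ 3) + 44 * (2 + c) * (N * W ^ 3) := by gcongr; exact one_le_pow₀ hW1
    _ = (2 + 44 * (2 + c)) * N ^ (1 + 3 * ε) := by rw [hexponent]; ring

theorem exists_norm_quadraticWeylSum_le_two_rpow {a ε : ℝ} (hε : 0 < ε)
    (happrox : ∀ᶠ j : ℕ in Filter.atTop, ∃ r : ℚ, |a - r| ≤ 1 / (r.den : ℝ) ^ 2 ∧
      (2 : ℝ) ^ (j * (1 - ε)) ≤ r.den ∧ (r.den : ℝ) ≤ 2 ^ (j * (1 + ε))) :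
    ∃ C : ℝ, 0 < C ∧ ∀ j M : ℕ, M ≤ 2 * 2 ^ j → ∀ b c : ℝ,
      ‖quadraticWeylSum a b c M‖ ≤ C * 2 ^ ((j : ℝ) / 2 * (1 + 3 * ε)) := by
  obtain ⟨J, hJ⟩ := Filter.eventually_atTop.1 happrox
  obtain ⟨C, hC, hbound⟩ := exists_weyl_bound_le_rpow hε
  refine ⟨√C + 2 * 2 ^ J, by positivity, fun j M hM b c ↦ ?_⟩
  have hM' : (M : ℝ) ≤ 2 * 2 ^ j := mod_cast hM
  set P : ℝ := 2 ^ ((j : ℝ) / 2 * (1 + 3 * ε)) with hP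
  have hP1 : 1 ≤ P := one_le_rpow one_le_two (by positivity)
  rcases lt_or_ge j J with hjJ | hJj
  · calc ‖quadraticWeylSum a b c M‖ ≤ 2 * 2 ^ j := (norm_quadraticWeylSum_le a b c M).trans hM'
      _ ≤ √C + 2 * 2 ^ J :=
          le_add_of_nonneg_of_le (sqrt_nonneg C) (by gcongr; exact one_le_two)
      _ ≤ (√C + 2 * 2 ^ J) * P := le_mul_of_one_le_right (by positivity) hP1
  · obtain ⟨r, hr, hr_lower, hr_upper⟩ := hJ j hJj
    rw [rpow_natCast_mul zero_le_two] at hr_lower hr_upper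
    have hP_sq : ((2 : ℝ) ^ j) ^ (1 + 3 * ε) = P ^ 2 := by
      rw [hP, ← rpow_natCast_mul zero_le_two, ← rpow_mul_natCast zero_le_two]
      congr 1
      push_cast
      ring
    have hsq : ‖quadraticWeylSum a b c M‖ ^ 2 ≤ (√C * P) ^ 2 := by
      rw [mul_pow, sq_sqrt hC.le, ← hP_sq]
      exact (norm_sq_quadraticWeylSum_le hr b c M).trans
        (hbound M (2 ^ j) r.den M.cast_nonneg (one_le_pow₀ one_le_two) hM' hr_lower hr_upper)
    calc ‖quadraticWeylSum a b c M‖ ≤ √C * P := le_of_sq_le_sq hsq (by positivity)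
      _ ≤ (√C + 2 * 2 ^ J) * P := by gcongr; exact le_add_of_nonneg_right (by positivity)

end WeylInequality

section BoundedVariationWeights

variable {E : Type*} [SeminormedAddCommGroup E]

lemma norm_sum_range_smul_le_of_norm_partialSum_le {𝕜 : Type*} [NormedRing 𝕜]
    [Module 𝕜 E] [IsBoundedSMul 𝕜 E] (w : ℕ → 𝕜) {z : ℕ → E} {M : ℕ} {R : ℝ}
    (hR : ∀ m ≤ M, ‖∑ n ∈ range m, z n‖ ≤ R) :
    ‖∑ n ∈ range M, w n • z n‖ ≤
      (‖w (M - 1)‖ + ∑ n ∈ range (M - 1), ‖w (n + 1) - w n‖) * R := by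
  have hterm (v : 𝕜) {m : ℕ} (hm : m ≤ M) : ‖v • ∑ n ∈ range m, z n‖ ≤ ‖v‖ * R :=
    (norm_smul_le _ _).trans (mul_le_mul_of_nonneg_left (hR m hm) (norm_nonneg v))
  rw [sum_range_by_parts w z M, add_mul, sum_mul]
  refine (norm_sub_le _ _).trans (add_le_add (hterm _ le_rfl) ?_)
  refine (norm_sum_le _ _).trans (sum_le_sum fun n hn ↦ hterm _ ?_)
  have := Finset.mem_range.1 hn
  omega

lemma sum_dist_le_toReal_eVariationOn {α F : Type*} [LinearOrder α] [PseudoMetricSpace F]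
    {f : α → F} {s : Set α} (hf : BoundedVariationOn f s) {u : ℕ → α} {n : ℕ}
    (hu : MonotoneOn u (Set.Iic n)) (hus : ∀ i ≤ n, u i ∈ s) :
    ∑ i ∈ range n, dist (f (u (i + 1))) (f (u i)) ≤ (eVariationOn f s).toReal := by
  simp only [dist_edist]
  rw [← ENNReal.toReal_sum fun i _ ↦ edist_ne_top _ _]
  exact ENNReal.toReal_mono hf (eVariationOn.sum_le_of_monotoneOn_Iic hu hus)

lemma norm_sum_Icc_smul_le_of_boundedVariationOn {𝕜 : Type*} [NormedRing 𝕜] [Module 𝕜 E]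
    [IsBoundedSMul 𝕜 E] {α : Type*} [LinearOrder α] {χ : α → 𝕜} {s : Set α}
    (hχ : BoundedVariationOn χ s) {A B : ℕ} (hAB : A ≤ B) {u : ℕ → α} (hu : Monotone u)
    (hus : ∀ n, A ≤ n → n ≤ B → u n ∈ s) {z : ℕ → E} {R : ℝ}
    (hR : ∀ m ≤ B + 1 - A, ‖∑ n ∈ range m, z (A + n)‖ ≤ R) :
    ‖∑ n ∈ Finset.Icc A B, χ (u n) • z n‖ ≤ (‖χ (u B)‖ + (eVariationOn χ s).toReal) * R := by
  have hR0 : 0 ≤ R := (norm_nonneg _).trans (hR 0 (Nat.zero_le _))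
  have hparts := norm_sum_range_smul_le_of_norm_partialSum_le (fun n ↦ χ (u (A + n))) hR
  rw [show B + 1 - A - 1 = B - A by omega, Nat.add_sub_cancel' hAB] at hparts
  rw [← Finset.Ico_add_one_right_eq_Icc, sum_Ico_eq_sum_range]
  refine hparts.trans ?_
  gcongr
  simp only [← dist_eq_norm]
  exact sum_dist_le_toReal_eVariationOn (u := fun n ↦ u (A + n)) hχ
    (fun m _ n _ hmn ↦ hu (Nat.add_le_add_left hmn A))
    fun n hn ↦ hus _ (Nat.le_add_right A n) (by omega)

end BoundedVariationWeights

section DyadicBlocks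

lemma exp_quadratic_eq_fourierChar (a x : ℝ) (n : ℕ) :
    Complex.exp (Complex.I * n ^ 2 * (2 * π * a : ℝ) + Complex.I * n * x) =
      𝐞 (a * n ^ 2 + x / (2 * π) * n) := by
  rw [Real.fourierChar_apply]
  congr 1
  push_cast
  field_simp [pi_ne_zero]

lemma sum_range_fourierChar_shift (a b : ℝ) (A m : ℕ) :
    ∑ n ∈ range m, (𝐞 (a * (A + n : ℕ) ^ 2 + b * (A + n : ℕ)) : ℂ) =
      quadraticWeylSum a (2 * a * A + b) (a * A ^ 2 + b * A) m := by
  refine sum_congr rfl fun n _ ↦ ?_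
  congr 2
  push_cast
  ring

lemma two_rpow_neg_mul_mem_Icc {j n : ℕ} (hj : 1 ≤ j) (hlower : 2 ^ (j - 1) ≤ n)
    (hupper : n ≤ 2 ^ (j + 1)) : (2 : ℝ) ^ (-(j : ℝ)) * n ∈ Icc (1 / 2 : ℝ) 2 := by
  obtain ⟨i, rfl⟩ := Nat.exists_eq_add_of_le' hj
  have hlower' : (2 : ℝ) ^ i ≤ n := mod_cast hlower
  have hupper' : (n : ℝ) ≤ 2 ^ (i + 2) := mod_cast hupper
  rw [rpow_neg zero_le_two, rpow_natCast, inv_mul_eq_div, Set.mem_Icc,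
    le_div_iff₀ (by positivity), div_le_iff₀ (by positivity)]
  constructor
  · linarith [pow_succ (2 : ℝ) i]
  · linarith [pow_succ (2 : ℝ) (i + 1)]

lemma exists_rat_approx_of_coprime {a X Y : ℝ}
    (h : ∃ p q : ℕ, 0 < q ∧ Nat.Coprime p q ∧ |a - (p : ℝ) / q| ≤ 1 / (q : ℝ) ^ 2 ∧
      X ≤ q ∧ (q : ℝ) ≤ Y) :
    ∃ r : ℚ, |a - r| ≤ 1 / (r.den : ℝ) ^ 2 ∧ X ≤ r.den ∧ (r.den : ℝ) ≤ Y := by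
  obtain ⟨p, q, hq, hpq, happrox, hX, hY⟩ := h
  have hden : ((p : ℚ) / q).den = q := by
    have := Rat.den_div_eq_of_coprime (a := (p : ℤ)) (b := (q : ℤ)) (mod_cast hq) hpq
    simpa only [Int.cast_natCast, Nat.cast_inj] using this
  refine ⟨p / q, ?_⟩
  rw [hden]
  push_cast
  exact ⟨happrox, hX, hY⟩

lemma boundedVariationOn_ofReal_comp_of_contDiff {χ : ℝ → ℝ} (hχ : ContDiff ℝ 1 χ) (x y : ℝ) :
    BoundedVariationOn (fun ξ ↦ (χ ξ : ℂ)) (Icc x y) :=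
  (Complex.ofRealCLM.contDiff.comp hχ).contDiffOn.absolutelyContinuousOnInterval
    |>.boundedVariationOn.mono Icc_subset_uIcc

theorem littlewood_paley_block_estimate_general {χ : ℝ → ℂ}
    (hχ : BoundedVariationOn χ (Icc (1 / 2) 2)) {a ε : ℝ} (hε : 0 < ε)
    (happrox : ∀ᶠ j : ℕ in Filter.atTop, ∃ r : ℚ, |a - r| ≤ 1 / (r.den : ℝ) ^ 2 ∧
      (2 : ℝ) ^ (j * (1 - ε)) ≤ r.den ∧ (r.den : ℝ) ≤ 2 ^ (j * (1 + ε))) :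
    ∃ C : ℝ, 0 < C ∧ ∀ j : ℕ, 1 ≤ j → ∀ x : ℝ,
      ‖∑ n ∈ Icc (2 ^ (j - 1) : ℕ) (2 ^ (j + 1)), χ ((2 : ℝ) ^ (-(j : ℝ)) * n) *
          Complex.exp (Complex.I * n ^ 2 * (2 * π * a : ℝ) + Complex.I * n * x)‖ ≤
        C * (2 : ℝ) ^ ((j : ℝ) / 2 * (1 + 3 * ε)) := by
  obtain ⟨C, hC, hWeyl⟩ := exists_norm_quadraticWeylSum_le_two_rpow hε happrox
  set V : ℝ := (eVariationOn χ (Icc (1 / 2) 2)).toReal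
  have : 0 ≤ V := ENNReal.toReal_nonneg
  refine ⟨(‖χ 2‖ + V + 1) * C, by positivity, fun j hj x ↦ ?_⟩
  set A : ℕ := 2 ^ (j - 1)
  set z : ℕ → ℂ := fun n ↦ 𝐞 (a * n ^ 2 + x / (2 * π) * n)
  have hA : 1 ≤ A := Nat.one_le_two_pow
  have hAB : A ≤ 2 ^ (j + 1) := Nat.pow_le_pow_right two_pos (by omega)
  have hpartial : ∀ m ≤ 2 ^ (j + 1) + 1 - A,
      ‖∑ n ∈ range m, z (A + n)‖ ≤ C * 2 ^ ((j : ℝ) / 2 * (1 + 3 * ε)) := fun m hm ↦ by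
    rw [sum_range_fourierChar_shift]
    exact hWeyl j m (by rw [pow_succ] at hm; omega) _ _
  have hlast : (2 : ℝ) ^ (-(j : ℝ)) * (2 ^ (j + 1) : ℕ) = 2 := by
    rw [rpow_neg zero_le_two, rpow_natCast, pow_succ]
    push_cast
    field_simp
  have hscale : Monotone fun n : ℕ ↦ (2 : ℝ) ^ (-(j : ℝ)) * n := fun m n hmn ↦ by
    dsimp only
    gcongr
  have hblock := norm_sum_Icc_smul_le_of_boundedVariationOn hχ hAB hscale
    (fun n ↦ two_rpow_neg_mul_mem_Icc hj) hpartial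
  rw [hlast] at hblock
  simp only [exp_quadratic_eq_fourierChar]
  refine hblock.trans ?_
  rw [mul_assoc _ C]
  exact mul_le_mul_of_nonneg_right (le_add_of_nonneg_right zero_le_one) (by positivity)

end DyadicBlocks

/-- Let `χ : ℝ → [0,1]` be a fixed smooth bump with support `[1/2, 2]` giving
a dyadic partition of unity, and let `a > 0` admit, for every `δ > 0`, rational approximations
`p_j/q_j` in lowest terms with `|a - p_j/q_j| ≤ 1/q_j²` and `2^{j(1-δ)} ≤ q_j ≤ 2^{j(1+δ)}` for
all large `j`. Then, for `t = 2πa` and each `δ > 0`, there is `C > 0` with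
`sup_x |Σ_{n=2^{j-1}}^{2^{j+1}} χ(2^{-j}n) e^{in²t + inx}| ≤ C·2^{(j/2)(1+δ)}` for all `j ≥ 1`. -/
theorem littlewood_paley_block_estimate (χ : ℝ → ℝ)
    (hχ : ContDiff ℝ (⊤ : ℕ∞) χ) (hχ01 : ∀ ξ, χ ξ ∈ Icc (0 : ℝ) 1)
    (hχsupp : tsupport χ = Icc (1 / 2 : ℝ) 2)
    (hχsum : ∀ ξ : ℝ, 1 ≤ ξ → ∑' j : ℕ, χ ((2 : ℝ) ^ (-(j : ℝ)) * ξ) = 1)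
    (a : ℝ) (ha : 0 < a)
    (happrox : ∀ δ : ℝ, 0 < δ → ∃ J : ℕ, ∀ j : ℕ, J ≤ j →
      ∃ (p q : ℕ), 0 < q ∧ Nat.Coprime p q ∧
        |a - (p : ℝ) / q| ≤ 1 / (q : ℝ) ^ 2 ∧
        (2 : ℝ) ^ ((j : ℝ) * (1 - δ)) ≤ q ∧ (q : ℝ) ≤ (2 : ℝ) ^ ((j : ℝ) * (1 + δ)))
    (t : ℝ) (ht : t = 2 * π * a) :
    ∀ δ : ℝ, 0 < δ → ∃ C : ℝ, 0 < C ∧ ∀ j : ℕ, 1 ≤ j → ∀ x : ℝ,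
      ‖∑ n ∈ Icc (2 ^ (j - 1) : ℕ) (2 ^ (j + 1)),
          ((χ ((2 : ℝ) ^ (-(j : ℝ)) * n) : ℝ) : ℂ) *
            Complex.exp (Complex.I * n ^ 2 * t + Complex.I * n * x)‖ ≤
        C * (2 : ℝ) ^ (((j : ℝ) / 2) * (1 + δ)) := by
  intro δ hδ
  subst ht
  rw [← mul_div_cancel₀ δ three_ne_zero]
  exact littlewood_paley_block_estimate_general
    (boundedVariationOn_ofReal_comp_of_contDiff (hχ.of_le (mod_cast le_top)) _ _)
    (div_pos hδ three_pos) ((Filter.eventually_atTop.2 (happrox (δ / 3) (by positivity))).mono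
      fun _ ↦ exists_rat_approx_of_coprime)
end

section
/- For almost every real a > 0 (with respect to Lebesgue measure), the denominators q_n of the continued fraction convergents p_n/q_n of a satisfy lim_{n→∞} (log q_n)/n = π²/(12 log 2). -/
open Real Filter MeasureTheory Topology

/-!
Let `T x = {1/x}` be the Gauss map and `xₖ = Tᵏ {a}`. For irrational `a` the denominators satisfy
`qₙ₊₁ + qₙ xₙ₊₁ = ∏_{k ≤ n} 1 / xₖ`, so `log qₙ` differs by at most `log 2` from the Birkhoff sum
`∑_{k < n} -log xₖ`. By Birkhoff's theorem the averages converge almost everywhere to the integral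
of `-log x` against the `T`-invariant density `1 / (log 2 (1 + x))`; expanding `1 / (1 + x)` into a
geometric series, this integral is `(1 / log 2) ∑ (-1)ⁿ / (n + 1)² = π² / (12 log 2)`.

Birkhoff's theorem is proved by the maximal function: if `∫ f < 0` and `Mₙ` is the running maximum
of the Birkhoff sums of `f`, then `Mₙ₊₁ - Mₙ ∘ T` has nonnegative integral, is dominated by `|f|`
and tends to `f` wherever the Birkhoff sums are unbounded, so by ergodicity they are bounded almost
everywhere.

`T` is ergodic because its transfer operator maps monotone functions on `[0, 1]` to antitone ones
of at most half the oscillation, while it preserves the covariance of a function with an invariant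
set. Hence an invariant set is uncorrelated with every monotone function, in particular with
every ray, so it is independent of every measurable set, including itself.
-/

section BirkhoffMax

variable {α R : Type*} [AddCommGroup R] [LinearOrder R] {T : α → α} {f : α → R}

/-- The running maximum `max (S₀ x, …, Sₙ x)` of the Birkhoff sums of `f` along `T`. The empty sum
`S₀ = 0` is included, so the maximum is nonnegative. -/
def birkhoffMax (T : α → α) (f : α → R) (n : ℕ) (x : α) : R :=
  partialSups (birkhoffSum T f · x) n

lemma birkhoffMax_mono (x : α) : Monotone (birkhoffMax T f · x) :=
  partialSups_monotone _

lemma birkhoffMax_nonneg (n : ℕ) (x : α) : 0 ≤ birkhoffMax T f n x := by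
  simpa [birkhoffMax] using birkhoffMax_mono (T := T) (f := f) x n.zero_le

variable [IsOrderedAddMonoid R]

lemma birkhoffMax_succ (n : ℕ) (x : α) :
    birkhoffMax T f (n + 1) x = max 0 (f x + birkhoffMax T f n (T x)) := by
  apply le_antisymm
  · refine partialSups_le _ _ _ fun k hk => ?_
    rcases k with _ | k
    · simp
    · rw [birkhoffSum_succ']
      exact le_max_of_le_right <| add_le_add_right
        (le_partialSups_of_le (birkhoffSum T f · (T x)) (by lia)) _
  · refine max_le (birkhoffMax_nonneg _ _) ?_
    rw [← le_sub_iff_add_le']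
    refine partialSups_le _ _ _ fun k hk => ?_
    rw [le_sub_iff_add_le', ← birkhoffSum_succ']
    exact le_partialSups_of_le (birkhoffSum T f · x) (by lia)

lemma abs_birkhoffMax_succ_sub_le (n : ℕ) (x : α) :
    |birkhoffMax T f (n + 1) x - birkhoffMax T f n (T x)| ≤ |f x| := by
  have hnonneg : 0 ≤ birkhoffMax T f n (T x) := birkhoffMax_nonneg n (T x)
  rw [birkhoffMax_succ, ← max_sub_sub_right, zero_sub, add_sub_cancel_right]
  exact abs_le.2 ⟨(neg_abs_le _).trans (le_max_right _ _),
    max_le ((neg_nonpos.2 hnonneg).trans (abs_nonneg _)) (le_abs_self _)⟩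

lemma bddAbove_range_birkhoffSum_map_iff (x : α) :
    BddAbove (Set.range (birkhoffSum T f · (T x))) ↔
      BddAbove (Set.range (birkhoffSum T f · x)) := by
  constructor
  · rintro ⟨C, hC⟩
    refine ⟨max 0 (f x + C), ?_⟩
    rintro _ ⟨_ | n, rfl⟩
    · simp
    · simp only [birkhoffSum_succ']
      exact le_max_of_le_right (add_le_add_right (hC ⟨n, rfl⟩) _)
  · rintro ⟨C, hC⟩
    refine ⟨C - f x, ?_⟩
    rintro _ ⟨n, rfl⟩
    simpa only [le_sub_iff_add_le', ← birkhoffSum_succ'] using hC ⟨n + 1, rfl⟩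

lemma tendsto_birkhoffMax_succ_sub [TopologicalSpace R] {x : α}
    (hx : ¬ BddAbove (Set.range (birkhoffSum T f · x))) :
    Tendsto (fun n => birkhoffMax T f (n + 1) x - birkhoffMax T f n (T x)) atTop (𝓝 (f x)) := by
  rw [← bddAbove_range_birkhoffSum_map_iff, ← bddAbove_range_partialSups] at hx
  have htop : Tendsto (birkhoffMax T f · (T x)) atTop atTop :=
    tendsto_atTop_atTop_of_monotone' (birkhoffMax_mono _) hx
  refine tendsto_const_nhds.congr' ?_
  filter_upwards [htop.eventually_ge_atTop (-f x)] with n hn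
  rw [birkhoffMax_succ, max_eq_right (neg_le_iff_add_nonneg'.1 hn), add_sub_cancel_right]

end BirkhoffMax

section BirkhoffErgodic

variable {α : Type*} [MeasurableSpace α] {μ : Measure α} {T : α → α} {f : α → ℝ}

lemma integrable_birkhoffMax (hT : MeasurePreserving T μ μ) (hf : Integrable f μ) (n : ℕ) :
    Integrable (birkhoffMax T f n) μ := by
  induction n with
  | zero => exact (integrable_zero α ℝ μ).congr (by simp [birkhoffMax, EventuallyEq])
  | succ n ih =>
    simp only [funext (birkhoffMax_succ n)]
    exact (integrable_zero α ℝ μ).sup (hf.add (hT.integrable_comp_of_integrable ih))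

lemma measurable_birkhoffSum (hT : Measurable T) (hf : Measurable f) (n : ℕ) :
    Measurable (birkhoffSum T f n) :=
  Finset.measurable_sum _ fun k _ => hf.comp (hT.iterate k)

lemma integral_birkhoffMax_succ_sub_nonneg (hT : MeasurePreserving T μ μ) (hf : Integrable f μ)
    (n : ℕ) : 0 ≤ ∫ x, (birkhoffMax T f (n + 1) x - birkhoffMax T f n (T x)) ∂μ := by
  have hint := integrable_birkhoffMax hT hf
  have hcomp : ∫ x, birkhoffMax T f n (T x) ∂μ = ∫ x, birkhoffMax T f n x ∂μ := by
    conv_rhs => rw [← hT.map_eq]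
    refine (integral_map hT.aemeasurable ?_).symm
    rw [hT.map_eq]
    exact (hint n).aestronglyMeasurable
  have hintT : Integrable (fun x => birkhoffMax T f n (T x)) μ :=
    hT.integrable_comp_of_integrable (hint n)
  rw [integral_sub (hint (n + 1)) hintT, hcomp, sub_nonneg]
  exact integral_mono (hint n) (hint (n + 1)) fun x => birkhoffMax_mono x n.le_succ

lemma integral_nonneg_of_ae_not_bddAbove_birkhoffSum (hT : MeasurePreserving T μ μ)
    (hf : Integrable f μ) (hunbdd : ∀ᵐ x ∂μ, ¬ BddAbove (Set.range (birkhoffSum T f · x))) :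
    0 ≤ ∫ x, f x ∂μ := by
  have hint := integrable_birkhoffMax hT hf
  refine ge_of_tendsto' (tendsto_integral_of_dominated_convergence (|f ·|)
    (fun n => ((hint (n + 1)).sub
      (hT.integrable_comp_of_integrable (hint n))).aestronglyMeasurable)
    hf.abs (fun n => ae_of_all _ fun x => abs_birkhoffMax_succ_sub_le n x)
    (hunbdd.mono fun x hx => tendsto_birkhoffMax_succ_sub hx))
    (integral_birkhoffMax_succ_sub_nonneg hT hf)

lemma ae_bddAbove_birkhoffSum_of_integral_neg (hT : Ergodic T μ) (hfm : Measurable f)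
    (hf : Integrable f μ) (hneg : ∫ x, f x ∂μ < 0) :
    ∀ᵐ x ∂μ, BddAbove (Set.range (birkhoffSum T f · x)) := by
  set B : Set α := {x | BddAbove (Set.range (birkhoffSum T f · x))}
  have hmeas : MeasurableSet B :=
    measurableSet_bddAbove_range (measurable_birkhoffSum hT.measurable hfm)
  have hinv : T ⁻¹' B = B := Set.ext bddAbove_range_birkhoffSum_map_iff
  refine (hT.ae_mem_or_ae_notMem hmeas hinv).resolve_right fun hunbdd => hneg.not_ge ?_
  exact integral_nonneg_of_ae_not_bddAbove_birkhoffSum hT.toMeasurePreserving hf hunbdd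

variable [IsProbabilityMeasure μ]

lemma ae_eventually_birkhoffAverage_lt (hT : Ergodic T μ) (hfm : Measurable f)
    (hf : Integrable f μ) {c : ℝ} (hc : ∫ x, f x ∂μ < c) :
    ∀ᵐ x ∂μ, ∀ᶠ n in atTop, birkhoffAverage ℝ T f n x < c := by
  obtain ⟨d, hd, hdc⟩ := exists_between hc
  have hneg : ∫ x, (f x - d) ∂μ < 0 := by
    rw [integral_sub hf (integrable_const d)]
    simpa using hd
  filter_upwards [ae_bddAbove_birkhoffSum_of_integral_neg hT (hfm.sub_const d)
    (hf.sub (integrable_const d)) hneg] with x ⟨C, hC⟩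
  have hlim : Tendsto (fun n : ℕ => C / n + d) atTop (𝓝 d) := by
    simpa using (tendsto_const_div_atTop_nhds_zero_nat C).add_const d
  filter_upwards [hlim.eventually_lt_const hdc, eventually_gt_atTop 0] with n hn hn0
  have hsum : birkhoffSum T f n x - n * d ≤ C := by
    simpa [birkhoffSum, Finset.sum_sub_distrib] using hC ⟨n, rfl⟩
  calc birkhoffAverage ℝ T f n x
      = (birkhoffSum T f n x - n * d) / n + d := by
        rw [birkhoffAverage, smul_eq_mul]
        field_simp
        ring
    _ ≤ C / n + d := by gcongr
    _ < c := hn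

lemma ae_forall_eventually_birkhoffAverage_lt (hT : Ergodic T μ) (hfm : Measurable f)
    (hf : Integrable f μ) :
    ∀ᵐ x ∂μ, ∀ c, ∫ y, f y ∂μ < c → ∀ᶠ n in atTop, birkhoffAverage ℝ T f n x < c := by
  have hrat : ∀ᵐ x ∂μ, ∀ q : {q : ℚ // ∫ y, f y ∂μ < q},
      ∀ᶠ n in atTop, birkhoffAverage ℝ T f n x < (q : ℚ) :=
    ae_all_iff.2 fun q => ae_eventually_birkhoffAverage_lt hT hfm hf q.2
  filter_upwards [hrat] with x hx c hc
  obtain ⟨q, hq, hqc⟩ := exists_rat_btwn hc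
  exact (hx ⟨q, hq⟩).mono fun n hn => hn.trans hqc

lemma ae_tendsto_birkhoffAverage_of_measurable (hT : Ergodic T μ) (hfm : Measurable f)
    (hf : Integrable f μ) :
    ∀ᵐ x ∂μ, Tendsto (birkhoffAverage ℝ T f · x) atTop (𝓝 (∫ y, f y ∂μ)) := by
  filter_upwards [ae_forall_eventually_birkhoffAverage_lt hT hfm hf,
    ae_forall_eventually_birkhoffAverage_lt hT hfm.neg hf.neg] with x hupper hlower
  refine tendsto_order.2 ⟨fun a ha => ?_, hupper⟩
  have hneg : ∫ y, (-f) y ∂μ < -a := by simpa [integral_neg] using ha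
  filter_upwards [hlower (-a) hneg] with n hn
  simpa [birkhoffAverage_neg] using hn

theorem ae_tendsto_birkhoffAverage (hT : Ergodic T μ) (hf : Integrable f μ) :
    ∀ᵐ x ∂μ, Tendsto (birkhoffAverage ℝ T f · x) atTop (𝓝 (∫ x, f x ∂μ)) := by
  have hmk : f =ᵐ[μ] hf.1.mk f := hf.1.ae_eq_mk
  have hae := ae_all_iff.2
    (hT.quasiMeasurePreserving.birkhoffAverage_ae_eq_of_ae_eq ℝ hmk)
  filter_upwards [hae, ae_tendsto_birkhoffAverage_of_measurable hT
    hf.1.stronglyMeasurable_mk.measurable (hf.congr hmk)] with x hx hlim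
  rw [integral_congr_ae hmk]
  exact hlim.congr fun n => (hx n).symm

end BirkhoffErgodic

section GaussMap

/-- The Gauss map `x ↦ {1/x}`, which shifts the continued fraction digits of `x ∈ (0, 1)`.
It sends `0` to `0` because `0⁻¹ = 0`. -/
noncomputable def gaussMap (x : ℝ) : ℝ := Int.fract x⁻¹

lemma measurable_gaussMap : Measurable gaussMap :=
  measurable_fract.comp measurable_inv

lemma irrational_fract {a : ℝ} (ha : Irrational a) : Irrational (Int.fract a) :=
  ha.sub_intCast ⌊a⌋

lemma fract_mem_Ioo_of_irrational {a : ℝ} (ha : Irrational a) : Int.fract a ∈ Set.Ioo (0 : ℝ) 1 :=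
  ⟨(Int.fract_nonneg a).lt_of_ne (irrational_fract ha).ne_zero.symm, Int.fract_lt_one a⟩

lemma gaussMap_mem_Ioo_of_irrational {x : ℝ} (hx : Irrational x) :
    gaussMap x ∈ Set.Ioo (0 : ℝ) 1 :=
  fract_mem_Ioo_of_irrational hx.inv

lemma irrational_gaussMap_iterate {x : ℝ} (hx : Irrational x) (n : ℕ) :
    Irrational (gaussMap^[n] x) := by
  induction n with
  | zero => exact hx
  | succ n ih =>
    rw [Function.iterate_succ_apply']
    exact irrational_fract ih.inv

lemma gaussMap_iterate_fract_mem_Ioo {a : ℝ} (ha : Irrational a) (n : ℕ) :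
    gaussMap^[n] (Int.fract a) ∈ Set.Ioo (0 : ℝ) 1 := by
  cases n with
  | zero => exact fract_mem_Ioo_of_irrational ha
  | succ n =>
    rw [Function.iterate_succ_apply']
    exact gaussMap_mem_Ioo_of_irrational (irrational_gaussMap_iterate (irrational_fract ha) n)

end GaussMap

section Denominators

open GenContFract

variable {a : ℝ}

lemma exists_intFractPair_stream_eq_some (ha : Irrational a) (n : ℕ) :
    ∃ p, IntFractPair.stream a n = some p ∧ p.fr = gaussMap^[n] (Int.fract a) := by
  induction n with
  | zero => exact ⟨_, rfl, rfl⟩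
  | succ n ih =>
    obtain ⟨p, hp, hfr⟩ := ih
    have hne : p.fr ≠ 0 := hfr ▸ (gaussMap_iterate_fract_mem_Ioo ha n).1.ne'
    refine ⟨_, IntFractPair.stream_succ_of_some hp hne, ?_⟩
    rw [Function.iterate_succ_apply', ← hfr]
    rfl

lemma of_s_get?_eq_floor_gaussMap_iterate (ha : Irrational a) (n : ℕ) :
    (GenContFract.of a).s.get? n = some ⟨1, (⌊(gaussMap^[n] (Int.fract a))⁻¹⌋ : ℝ)⟩ := by
  obtain ⟨p, hp, hfr⟩ := exists_intFractPair_stream_eq_some ha n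
  have hne : p.fr ≠ 0 := hfr ▸ (gaussMap_iterate_fract_mem_Ioo ha n).1.ne'
  rw [get?_of_eq_some_of_get?_intFractPair_stream_fr_ne_zero hp hne, hfr]
  rfl

lemma dens_succ_add_dens_mul_gaussMap_iterate (ha : Irrational a) (n : ℕ) :
    (GenContFract.of a).dens (n + 1) + (GenContFract.of a).dens n * gaussMap^[n + 1] (Int.fract a) =
      ∏ k ∈ Finset.range (n + 1), (gaussMap^[k] (Int.fract a))⁻¹ := by
  induction n with
  | zero =>
    rw [first_den_eq (of_s_get?_eq_floor_gaussMap_iterate ha 0), zeroth_den_eq_one]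
    simp [gaussMap]
  | succ n ih =>
    rw [Finset.prod_range_succ, ← ih, Function.iterate_succ_apply' _ (n + 1),
      dens_recurrence (of_s_get?_eq_floor_gaussMap_iterate ha (n + 1)) rfl rfl]
    have hpos := (gaussMap_iterate_fract_mem_Ioo ha (n + 1)).1
    generalize gaussMap^[n + 1] (Int.fract a) = x at hpos ⊢
    rw [gaussMap, ← Int.self_sub_floor]
    field_simp
    ring

lemma one_le_dens_of (a : ℝ) (n : ℕ) : 1 ≤ (GenContFract.of a).dens n := by
  have hmono : Monotone (GenContFract.of a).dens := monotone_nat_of_le_succ fun _ => of_den_mono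
  simpa using hmono n.zero_le

lemma dens_le_prod_inv_gaussMap_iterate (ha : Irrational a) (n : ℕ) :
    (GenContFract.of a).dens n ≤ ∏ k ∈ Finset.range n, (gaussMap^[k] (Int.fract a))⁻¹ := by
  cases n with
  | zero => simp
  | succ n =>
    rw [← dens_succ_add_dens_mul_gaussMap_iterate ha]
    exact le_add_of_nonneg_right
      (mul_nonneg zero_le_of_den (gaussMap_iterate_fract_mem_Ioo ha (n + 1)).1.le)

lemma prod_inv_gaussMap_iterate_le_two_mul_dens (ha : Irrational a) (n : ℕ) :
    ∏ k ∈ Finset.range n, (gaussMap^[k] (Int.fract a))⁻¹ ≤ 2 * (GenContFract.of a).dens n := by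
  cases n with
  | zero => simp
  | succ n =>
    rw [← dens_succ_add_dens_mul_gaussMap_iterate ha, two_mul]
    gcongr
    calc (GenContFract.of a).dens n * gaussMap^[n + 1] (Int.fract a)
        ≤ (GenContFract.of a).dens n :=
          mul_le_of_le_one_right zero_le_of_den (gaussMap_iterate_fract_mem_Ioo ha (n + 1)).2.le
      _ ≤ (GenContFract.of a).dens (n + 1) := of_den_mono

lemma birkhoffSum_neg_log_gaussMap_eq_log_prod (ha : Irrational a) (n : ℕ) :
    birkhoffSum gaussMap (fun x => -Real.log x) n (Int.fract a) =
      Real.log (∏ k ∈ Finset.range n, (gaussMap^[k] (Int.fract a))⁻¹) := by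
  rw [Real.log_prod fun k _ => inv_ne_zero (gaussMap_iterate_fract_mem_Ioo ha k).1.ne']
  simp only [birkhoffSum, Real.log_inv]

lemma log_dens_le_birkhoffSum (ha : Irrational a) (n : ℕ) :
    Real.log ((GenContFract.of a).dens n) ≤
      birkhoffSum gaussMap (fun x => -Real.log x) n (Int.fract a) := by
  rw [birkhoffSum_neg_log_gaussMap_eq_log_prod ha]
  exact Real.log_le_log (one_pos.trans_le (one_le_dens_of a n))
    (dens_le_prod_inv_gaussMap_iterate ha n)

lemma birkhoffSum_le_log_two_add_log_dens (ha : Irrational a) (n : ℕ) :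
    birkhoffSum gaussMap (fun x => -Real.log x) n (Int.fract a) ≤
      Real.log 2 + Real.log ((GenContFract.of a).dens n) := by
  have hprod : 0 < ∏ k ∈ Finset.range n, (gaussMap^[k] (Int.fract a))⁻¹ :=
    Finset.prod_pos fun k _ => inv_pos.2 (gaussMap_iterate_fract_mem_Ioo ha k).1
  rw [birkhoffSum_neg_log_gaussMap_eq_log_prod ha,
    ← Real.log_mul two_ne_zero (one_pos.trans_le (one_le_dens_of a n)).ne']
  exact Real.log_le_log hprod (prod_inv_gaussMap_iterate_le_two_mul_dens ha n)

lemma tendsto_log_dens_div_of_tendsto_birkhoffAverage (ha : Irrational a) {m : ℝ}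
    (h : Tendsto (birkhoffAverage ℝ gaussMap (fun x => -Real.log x) · (Int.fract a))
      atTop (𝓝 m)) :
    Tendsto (fun n : ℕ => Real.log ((GenContFract.of a).dens n) / n) atTop (𝓝 m) := by
  simp only [birkhoffAverage, smul_eq_mul, inv_mul_eq_div] at h
  have hlower : Tendsto (fun n : ℕ => (birkhoffSum gaussMap (fun x => -Real.log x) n (Int.fract a)
      - Real.log 2) / n) atTop (𝓝 m) := by
    simpa only [sub_div, sub_zero] using h.sub (tendsto_const_div_atTop_nhds_zero_nat (Real.log 2))
  refine tendsto_of_tendsto_of_tendsto_of_le_of_le hlower h (fun n => ?_) (fun n => ?_)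
  · have hle := birkhoffSum_le_log_two_add_log_dens ha n
    dsimp only
    gcongr
    linarith
  · dsimp only
    gcongr
    exact log_dens_le_birkhoffSum ha n

end Denominators

section LevyIntegral

lemma pow_mul_neg_log_nonneg (n : ℕ) {x : ℝ} (hx : x ∈ Set.Ioo (0 : ℝ) 1) :
    0 ≤ x ^ n * -Real.log x :=
  mul_nonneg (pow_nonneg hx.1.le n) (neg_nonneg.2 (Real.log_nonpos hx.1.le hx.2.le))

/-- An antiderivative of `xⁿ (-log x)` on `(0, ∞)`, grouped so that continuity at `0` follows from
that of `x log x`. -/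
noncomputable def powMulNegLogPrimitive (n : ℕ) (x : ℝ) : ℝ :=
  x ^ (n + 1) / ((n : ℝ) + 1) ^ 2 - x ^ n * (x * Real.log x) / ((n : ℝ) + 1)

lemma continuous_powMulNegLogPrimitive (n : ℕ) : Continuous (powMulNegLogPrimitive n) := by
  have := Real.continuous_mul_log
  unfold powMulNegLogPrimitive
  fun_prop

lemma hasDerivAt_powMulNegLogPrimitive (n : ℕ) {x : ℝ} (hx : x ≠ 0) :
    HasDerivAt (powMulNegLogPrimitive n) (x ^ n * -Real.log x) x := by
  have hpow := hasDerivAt_pow (n + 1) x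
  have hprim : powMulNegLogPrimitive n = fun x =>
      x ^ (n + 1) / ((n : ℝ) + 1) ^ 2 - x ^ (n + 1) * Real.log x / ((n : ℝ) + 1) := by
    funext y
    rw [powMulNegLogPrimitive]
    ring
  rw [hprim]
  refine ((hpow.div_const (((n : ℝ) + 1) ^ 2)).sub
    ((hpow.mul (Real.hasDerivAt_log hx)).div_const ((n : ℝ) + 1))).congr_deriv ?_
  push_cast
  field_simp
  ring

lemma intervalIntegrable_pow_mul_neg_log (n : ℕ) :
    IntervalIntegrable (fun x : ℝ => x ^ n * -Real.log x) volume 0 1 :=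
  intervalIntegral.intervalIntegrable_log'.neg.continuousOn_mul (continuous_pow n).continuousOn

lemma integrableOn_pow_mul_neg_log (n : ℕ) :
    IntegrableOn (fun x : ℝ => x ^ n * -Real.log x) (Set.Ioo 0 1) :=
  (intervalIntegrable_iff_integrableOn_Ioo_of_le zero_le_one).1
    (intervalIntegrable_pow_mul_neg_log n)

lemma integral_pow_mul_neg_log (n : ℕ) :
    ∫ x in Set.Ioo (0 : ℝ) 1, x ^ n * -Real.log x = 1 / ((n : ℝ) + 1) ^ 2 := by
  rw [← integral_Ioc_eq_integral_Ioo, ← intervalIntegral.integral_of_le zero_le_one,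
    intervalIntegral.integral_eq_sub_of_hasDerivAt_of_le zero_le_one
      (continuous_powMulNegLogPrimitive n).continuousOn
      (fun x hx => hasDerivAt_powMulNegLogPrimitive n hx.1.ne')
      (intervalIntegrable_pow_mul_neg_log n)]
  simp [powMulNegLogPrimitive]

lemma hasSum_one_div_succ_sq : HasSum (fun n : ℕ => 1 / ((n : ℝ) + 1) ^ 2) (π ^ 2 / 6) := by
  simpa using (hasSum_nat_add_iff' (f := fun n : ℕ => (1 : ℝ) / (n : ℝ) ^ 2) 1).2 hasSum_zeta_two

lemma hasSum_one_div_two_mul_add_two_sq :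
    HasSum (fun n : ℕ => 1 / (((2 * n + 1 : ℕ) : ℝ) + 1) ^ 2) (π ^ 2 / 24) := by
  have hterm (n : ℕ) : 1 / (((2 * n + 1 : ℕ) : ℝ) + 1) ^ 2 = 1 / 4 * (1 / ((n : ℝ) + 1) ^ 2) := by
    push_cast
    field_simp
    ring
  simp only [hterm]
  rw [show π ^ 2 / 24 = 1 / 4 * (π ^ 2 / 6) by ring]
  exact hasSum_one_div_succ_sq.mul_left (1 / 4)

lemma hasSum_one_div_two_mul_add_one_sq :
    HasSum (fun n : ℕ => 1 / (((2 * n : ℕ) : ℝ) + 1) ^ 2) (π ^ 2 / 8) := by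
  have hsum : Summable (fun n : ℕ => 1 / (((2 * n : ℕ) : ℝ) + 1) ^ 2) :=
    hasSum_one_div_succ_sq.summable.comp_injective (mul_right_injective₀ two_ne_zero)
  have hadd := (hsum.hasSum.even_add_odd (f := fun n : ℕ => 1 / ((n : ℝ) + 1) ^ 2)
    hasSum_one_div_two_mul_add_two_sq).unique hasSum_one_div_succ_sq
  exact hsum.hasSum_iff.2 (by linarith)

lemma hasSum_neg_one_pow_mul_one_div_succ_sq :
    HasSum (fun n : ℕ => (-1 : ℝ) ^ n * (1 / ((n : ℝ) + 1) ^ 2)) (π ^ 2 / 12) := by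
  have heven : HasSum (fun n : ℕ => (-1 : ℝ) ^ (2 * n) * (1 / (((2 * n : ℕ) : ℝ) + 1) ^ 2))
      (π ^ 2 / 8) := by
    simpa only [pow_mul, neg_one_sq, one_pow, one_mul] using hasSum_one_div_two_mul_add_one_sq
  have hodd : HasSum (fun n : ℕ => (-1 : ℝ) ^ (2 * n + 1) * (1 / (((2 * n + 1 : ℕ) : ℝ) + 1) ^ 2))
      (-(π ^ 2 / 24)) := by
    simpa only [pow_succ _ (2 * _), pow_mul, neg_one_sq, one_pow, one_mul, neg_mul]
      using hasSum_one_div_two_mul_add_two_sq.neg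
  convert heven.even_add_odd (f := fun n : ℕ => (-1 : ℝ) ^ n * (1 / ((n : ℝ) + 1) ^ 2)) hodd using 1
  ring

lemma hasSum_neg_one_pow_mul_pow_mul_neg_log {x : ℝ} (hx : |x| < 1) :
    HasSum (fun n : ℕ => (-1 : ℝ) ^ n * (x ^ n * -Real.log x)) ((1 + x)⁻¹ * -Real.log x) := by
  have hgeom := (hasSum_geometric_of_norm_lt_one (ξ := -x) (by simpa using hx)).mul_right
    (-Real.log x)
  simpa only [sub_neg_eq_add, ← mul_assoc, ← mul_pow, neg_one_mul] using hgeom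

lemma integral_inv_one_add_mul_neg_log :
    ∫ x in Set.Ioo (0 : ℝ) 1, (1 + x)⁻¹ * -Real.log x = π ^ 2 / 12 := by
  have hnorm (n : ℕ) : ∫ x in Set.Ioo (0 : ℝ) 1, ‖(-1 : ℝ) ^ n * (x ^ n * -Real.log x)‖ =
      1 / ((n : ℝ) + 1) ^ 2 := by
    rw [← integral_pow_mul_neg_log n]
    refine setIntegral_congr_fun measurableSet_Ioo fun x hx => ?_
    rw [norm_mul, norm_pow, norm_neg, norm_one, one_pow, one_mul,
      Real.norm_of_nonneg (pow_mul_neg_log_nonneg n hx)]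
  have hswap := hasSum_integral_of_summable_integral_norm (μ := volume.restrict (Set.Ioo (0 : ℝ) 1))
    (F := fun (n : ℕ) (x : ℝ) => (-1 : ℝ) ^ n * (x ^ n * -Real.log x))
    (fun n => (integrableOn_pow_mul_neg_log n).const_mul _)
    (by simpa only [hnorm] using hasSum_one_div_succ_sq.summable)
  simp only [integral_const_mul, integral_pow_mul_neg_log] at hswap
  rw [← hswap.unique hasSum_neg_one_pow_mul_one_div_succ_sq]
  refine setIntegral_congr_fun measurableSet_Ioo fun x hx => ?_
  exact (hasSum_neg_one_pow_mul_pow_mul_neg_log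
    (abs_lt.2 ⟨neg_one_lt_zero.trans hx.1, hx.2⟩)).tsum_eq.symm

end LevyIntegral

section GaussBranch

/-- The inverse branch `t ↦ 1 / (k + 1 + t)` of the Gauss map whose image of `(0, 1)` consists of
the points with first continued fraction digit `k + 1`. -/
noncomputable def gaussBranch (k : ℕ) (t : ℝ) : ℝ := ((k : ℝ) + 1 + t)⁻¹

variable {k : ℕ} {t x : ℝ}

lemma gaussBranch_mem_Icc (k : ℕ) (ht : 0 ≤ t) : gaussBranch k t ∈ Set.Icc (0 : ℝ) 1 := by
  refine ⟨by unfold gaussBranch; positivity, inv_le_one_of_one_le₀ ?_⟩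
  linarith [k.cast_nonneg (α := ℝ)]

lemma gaussBranch_mem_Ioo (k : ℕ) (ht : 0 < t) : gaussBranch k t ∈ Set.Ioo (0 : ℝ) 1 := by
  refine ⟨by unfold gaussBranch; positivity, inv_lt_one_of_one_lt₀ ?_⟩
  linarith [k.cast_nonneg (α := ℝ)]

lemma antitoneOn_gaussBranch (k : ℕ) : AntitoneOn (gaussBranch k) (Set.Ici 0) := by
  intro s (hs : 0 ≤ s) t _ hst
  unfold gaussBranch
  gcongr

lemma antitone_gaussBranch_index (ht : 0 ≤ t) : Antitone (gaussBranch · t) := by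
  intro i j hij
  dsimp only [gaussBranch]
  gcongr

lemma gaussBranch_injective (k : ℕ) : Function.Injective (gaussBranch k) :=
  inv_injective.comp (add_right_injective _)

lemma hasDerivAt_gaussBranch (h : (k : ℝ) + 1 + t ≠ 0) :
    HasDerivAt (gaussBranch k) (-(((k : ℝ) + 1 + t) ^ 2)⁻¹) t := by
  refine (((hasDerivAt_id t).const_add ((k : ℝ) + 1)).fun_inv h).congr_deriv ?_
  rw [neg_div, one_div, id]

lemma gaussMap_gaussBranch (k : ℕ) (ht : t ∈ Set.Ico (0 : ℝ) 1) :
    gaussMap (gaussBranch k t) = t := by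
  rw [gaussMap, gaussBranch, inv_inv, add_comm, ← Nat.cast_add_one, Int.fract_add_natCast,
    Int.fract_eq_self.2 ht]

lemma floor_inv_gaussBranch (k : ℕ) (ht : t ∈ Set.Ico (0 : ℝ) 1) :
    ⌊(gaussBranch k t)⁻¹⌋₊ = k + 1 := by
  rw [gaussBranch, inv_inv, add_comm, ← Nat.cast_add_one, Nat.floor_add_natCast ht.1,
    Nat.floor_eq_zero.2 ht.2, zero_add]

lemma exists_gaussBranch_gaussMap_eq (hx : x ∈ Set.Ioc (0 : ℝ) 1) :
    ∃ k, gaussBranch k (gaussMap x) = x := by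
  have hfloor : 1 ≤ ⌊x⁻¹⌋₊ := Nat.le_floor (by exact_mod_cast (one_le_inv₀ hx.1).2 hx.2)
  obtain ⟨k, hk⟩ := Nat.exists_eq_add_of_le' hfloor
  refine ⟨k, ?_⟩
  rw [gaussBranch, inv_eq_iff_eq_inv, gaussMap, ← Nat.cast_add_one, ← hk,
    natCast_floor_eq_intCast_floor (inv_nonneg.2 hx.1.le), Int.floor_add_fract]

lemma pairwise_disjoint_image_gaussBranch :
    Pairwise (Function.onFun Disjoint fun k => gaussBranch k '' Set.Ioo 0 1) := by
  intro i j hij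
  refine Set.disjoint_left.2 ?_
  rintro _ ⟨s, hs, rfl⟩ ⟨t, ht, hst⟩
  apply hij
  rw [← Nat.add_right_cancel_iff (n := 1), ← floor_inv_gaussBranch i (Set.Ioo_subset_Ico_self hs),
    ← hst, floor_inv_gaussBranch j (Set.Ioo_subset_Ico_self ht)]

lemma ae_irrational : ∀ᵐ x : ℝ, Irrational x :=
  (Set.countable_range ((↑) : ℚ → ℝ)).ae_notMem volume

lemma iUnion_image_gaussBranch_ae_eq :
    ⋃ k, gaussBranch k '' Set.Ioo 0 1 =ᵐ[volume] Set.Ioo (0 : ℝ) 1 := by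
  refine eventuallyEq_set.2 ?_
  filter_upwards [ae_irrational] with x hirr
  rw [Set.mem_iUnion]
  constructor
  · rintro ⟨k, t, ht, rfl⟩
    exact gaussBranch_mem_Ioo k ht.1
  · intro hx
    obtain ⟨k, hk⟩ := exists_gaussBranch_gaussMap_eq (Set.Ioo_subset_Ioc_self hx)
    exact ⟨k, gaussMap x, gaussMap_mem_Ioo_of_irrational hirr, hk⟩

variable {E : Type*} [NormedAddCommGroup E] [NormedSpace ℝ E] {f : ℝ → E}

lemma hasDerivWithinAt_gaussBranch_Ioo (k : ℕ) :
    ∀ t ∈ Set.Ioo (0 : ℝ) 1,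
      HasDerivWithinAt (gaussBranch k) (-(((k : ℝ) + 1 + t) ^ 2)⁻¹) (Set.Ioo 0 1) t := fun t ht =>
  have := ht.1
  (hasDerivAt_gaussBranch (by positivity)).hasDerivWithinAt

lemma measurableSet_image_gaussBranch (k : ℕ) : MeasurableSet (gaussBranch k '' Set.Ioo 0 1) :=
  measurable_image_of_fderivWithin measurableSet_Ioo
    (hasDerivWithinAt_gaussBranch_Ioo k) (gaussBranch_injective k).injOn

lemma integrableOn_inv_sq_smul_comp_gaussBranch (hf : IntegrableOn f (Set.Ioo 0 1)) (k : ℕ) :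
    IntegrableOn (fun t => (((k : ℝ) + 1 + t) ^ 2)⁻¹ • f (gaussBranch k t)) (Set.Ioo 0 1) := by
  have himage : gaussBranch k '' Set.Ioo 0 1 ⊆ Set.Ioo 0 1 := by
    rintro _ ⟨t, ht, rfl⟩
    exact gaussBranch_mem_Ioo k ht.1
  simpa only [abs_neg, abs_inv, abs_sq] using (integrableOn_image_iff_integrableOn_abs_deriv_smul
    measurableSet_Ioo (hasDerivWithinAt_gaussBranch_Ioo k) (gaussBranch_injective k).injOn f).1
    (hf.mono_set himage)

lemma hasSum_integral_comp_gaussBranch (hf : IntegrableOn f (Set.Ioo 0 1)) :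
    HasSum (fun k : ℕ => ∫ t in Set.Ioo (0 : ℝ) 1, (((k : ℝ) + 1 + t) ^ 2)⁻¹ • f (gaussBranch k t))
      (∫ x in Set.Ioo (0 : ℝ) 1, f x) := by
  have hchange (k : ℕ) := integral_image_eq_integral_abs_deriv_smul measurableSet_Ioo
    (hasDerivWithinAt_gaussBranch_Ioo k) (gaussBranch_injective k).injOn f
  simp only [abs_neg, abs_inv, abs_sq] at hchange
  simp only [← hchange]
  rw [← setIntegral_congr_set iUnion_image_gaussBranch_ae_eq]
  exact hasSum_integral_iUnion measurableSet_image_gaussBranch pairwise_disjoint_image_gaussBranch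
    (hf.congr_set_ae iUnion_image_gaussBranch_ae_eq)

lemma integral_eq_integral_tsum_gaussBranch (hf : IntegrableOn f (Set.Ioo 0 1)) :
    ∫ x in Set.Ioo (0 : ℝ) 1, f x =
      ∫ t in Set.Ioo (0 : ℝ) 1, ∑' k : ℕ, (((k : ℝ) + 1 + t) ^ 2)⁻¹ • f (gaussBranch k t) := by
  have hsum : Summable fun k : ℕ =>
      ∫ t in Set.Ioo (0 : ℝ) 1, ‖(((k : ℝ) + 1 + t) ^ 2)⁻¹ • f (gaussBranch k t)‖ := by
    simpa only [norm_smul, norm_inv, norm_pow, sq_abs, Real.norm_eq_abs, smul_eq_mul]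
      using (hasSum_integral_comp_gaussBranch hf.norm).summable
  exact (hasSum_integral_comp_gaussBranch hf).unique (hasSum_integral_of_summable_integral_norm
    (integrableOn_inv_sq_smul_comp_gaussBranch hf) hsum)

end GaussBranch

section AbelSummation

lemma sum_range_mul_le_sum_range_mul_of_antitone {R : Type*} [CommRing R] [PartialOrder R]
    [IsOrderedRing R] {c u : ℕ → R} (hc : ∀ n, 0 ≤ ∑ k ∈ Finset.range n, c k) (hu : Antitone u)
    (n : ℕ) : (∑ k ∈ Finset.range n, c k) * u n ≤ ∑ k ∈ Finset.range n, c k * u k := by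
  induction n with
  | zero => simp
  | succ n ih =>
    calc (∑ k ∈ Finset.range (n + 1), c k) * u (n + 1)
        ≤ (∑ k ∈ Finset.range (n + 1), c k) * u n :=
          mul_le_mul_of_nonneg_left (hu n.le_succ) (hc (n + 1))
      _ = (∑ k ∈ Finset.range n, c k) * u n + c n * u n := by
          rw [Finset.sum_range_succ, add_mul]
      _ ≤ ∑ k ∈ Finset.range (n + 1), c k * u k := by
          rw [Finset.sum_range_succ]
          gcongr

lemma tsum_mul_nonneg_of_antitone {c u : ℕ → ℝ} (hc : ∀ n, 0 ≤ ∑ k ∈ Finset.range n, c k)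
    (hc0 : HasSum c 0) (hu : Antitone u) (hbdd : BddBelow (Set.range u))
    (hcu : Summable fun k => c k * u k) : 0 ≤ ∑' k, c k * u k := by
  obtain ⟨b, hb⟩ := hbdd
  have hshift : HasSum (fun k => c k * (u k - b)) (∑' k, c k * u k) := by
    simpa only [mul_sub, zero_mul, sub_zero] using hcu.hasSum.sub (hc0.mul_right b)
  refine ge_of_tendsto' hshift.tendsto_sum_nat fun n => ?_
  exact (mul_nonneg (hc n) (sub_nonneg.2 (hb ⟨n, rfl⟩))).trans
    (sum_range_mul_le_sum_range_mul_of_antitone hc (fun i j hij => sub_le_sub_right (hu hij) b) n)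

end AbelSummation

section GaussTransfer

variable {g : ℝ → ℝ} {x y : ℝ}

/-- The weight of the branch `b = gaussBranch k` in `gaussTransfer`. It is the quotient of
`|deriv b x| * ρ (b x)` by `ρ x`, where `ρ x = 1 / (1 + x)` is the invariant density up to
normalisation. -/
noncomputable def gaussWeight (k : ℕ) (x : ℝ) : ℝ :=
  (1 + x) / (((k : ℝ) + 1 + x) * ((k : ℝ) + 2 + x))

/-- The transfer operator of the Gauss map with respect to the Gauss measure, that is, the adjoint
of composition with `gaussMap`. -/
noncomputable def gaussTransfer (g : ℝ → ℝ) (x : ℝ) : ℝ :=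
  ∑' k : ℕ, gaussWeight k x * g (gaussBranch k x)

lemma gaussWeight_nonneg (k : ℕ) (hx : 0 ≤ x) : 0 ≤ gaussWeight k x := by
  unfold gaussWeight
  positivity

lemma sum_range_gaussWeight (n : ℕ) (hx : 0 ≤ x) :
    ∑ k ∈ Finset.range n, gaussWeight k x = 1 - (1 + x) / ((n : ℝ) + 1 + x) := by
  have htelescope (k : ℕ) :
      gaussWeight k x = (1 + x) / ((k : ℝ) + 1 + x) - (1 + x) / (((k + 1 : ℕ) : ℝ) + 1 + x) := by
    rw [gaussWeight]
    push_cast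
    field_simp
    ring
  simp only [htelescope]
  rw [Finset.sum_range_sub', Nat.cast_zero, zero_add, div_self (by positivity)]

lemma hasSum_gaussWeight (hx : 0 ≤ x) : HasSum (fun k => gaussWeight k x) 1 := by
  rw [hasSum_iff_tendsto_nat_of_nonneg fun k => gaussWeight_nonneg k hx]
  simp only [fun n => sum_range_gaussWeight n hx, add_assoc]
  have hdenom : Tendsto (fun n : ℕ => (n : ℝ) + (1 + x)) atTop atTop :=
    tendsto_atTop_add_const_right _ _ tendsto_natCast_atTop_atTop
  simpa only [sub_zero] using tendsto_const_nhds.sub (hdenom.const_div_atTop (1 + x))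

lemma sum_range_gaussWeight_sub_nonneg (n : ℕ) (hx : 0 ≤ x) (hxy : x ≤ y) :
    0 ≤ ∑ k ∈ Finset.range n, (gaussWeight k x - gaussWeight k y) := by
  have hy := hx.trans hxy
  rw [Finset.sum_sub_distrib, sum_range_gaussWeight n hx, sum_range_gaussWeight n hy,
    sub_sub_sub_cancel_left, sub_nonneg, div_le_div_iff₀ (by positivity) (by positivity)]
  nlinarith [mul_le_mul_of_nonneg_left hxy n.cast_nonneg (α := ℝ)]

lemma gaussTransfer_const (c : ℝ) (hx : 0 ≤ x) : gaussTransfer (fun _ => c) x = c :=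
  ((hasSum_gaussWeight hx).mul_right c).tsum_eq.trans (one_mul c)

lemma abs_le_max_of_monotoneOn_Icc {a b : ℝ} (hg : MonotoneOn g (Set.Icc a b))
    (hx : x ∈ Set.Icc a b) : |g x| ≤ max |g a| |g b| := by
  have hab := hx.1.trans hx.2
  exact abs_le_max_abs_abs (hg (Set.left_mem_Icc.2 hab) hx hx.1)
    (hg hx (Set.right_mem_Icc.2 hab) hx.2)

lemma summable_gaussWeight_mul (hg : MonotoneOn g (Set.Icc 0 1)) (hx : 0 ≤ x) (hy : 0 ≤ y) :
    Summable fun k => gaussWeight k x * g (gaussBranch k y) := by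
  refine .of_norm_bounded ((hasSum_gaussWeight hx).summable.mul_right (max |g 0| |g 1|))
    fun k => ?_
  rw [norm_mul, Real.norm_of_nonneg (gaussWeight_nonneg k hx)]
  exact mul_le_mul_of_nonneg_left
    (abs_le_max_of_monotoneOn_Icc hg (gaussBranch_mem_Icc k hy)) (gaussWeight_nonneg k hx)

lemma antitoneOn_gaussTransfer (hg : MonotoneOn g (Set.Icc 0 1)) :
    AntitoneOn (gaussTransfer g) (Set.Icc 0 1) := by
  rintro x ⟨hx, -⟩ y ⟨hy, -⟩ hxy
  have hxx := summable_gaussWeight_mul hg hx hx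
  have hyx := summable_gaussWeight_mul hg hy hx
  have hbranch : gaussTransfer g y ≤ ∑' k, gaussWeight k y * g (gaussBranch k x) := by
    refine (summable_gaussWeight_mul hg hy hy).tsum_le_tsum (fun k => ?_) hyx
    exact mul_le_mul_of_nonneg_left (hg (gaussBranch_mem_Icc k hy) (gaussBranch_mem_Icc k hx)
      (antitoneOn_gaussBranch k hx hy hxy)) (gaussWeight_nonneg k hy)
  have hanti : Antitone fun k => g (gaussBranch k x) := fun i j hij =>
    hg (gaussBranch_mem_Icc j hx) (gaussBranch_mem_Icc i hx) (antitone_gaussBranch_index hx hij)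
  have hbdd : BddBelow (Set.range fun k => g (gaussBranch k x)) := by
    refine ⟨g 0, ?_⟩
    rintro _ ⟨k, rfl⟩
    exact hg (by simp) (gaussBranch_mem_Icc k hx) (gaussBranch_mem_Icc k hx).1
  have hweight : 0 ≤ ∑' k, (gaussWeight k x - gaussWeight k y) * g (gaussBranch k x) := by
    refine tsum_mul_nonneg_of_antitone
      (fun n => sum_range_gaussWeight_sub_nonneg n hx hxy) ?_ hanti hbdd ?_
    · simpa only [sub_self] using (hasSum_gaussWeight hx).sub (hasSum_gaussWeight hy)
    · simpa only [sub_mul] using hxx.sub hyx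
  simp only [sub_mul] at hweight
  rw [hxx.tsum_sub hyx, sub_nonneg] at hweight
  exact hbranch.trans hweight

lemma le_gaussTransfer (hg : MonotoneOn g (Set.Icc 0 1)) (hx : 0 ≤ x) :
    g 0 ≤ gaussTransfer g x := by
  rw [← gaussTransfer_const (g 0) hx]
  refine ((hasSum_gaussWeight hx).summable.mul_right (g 0)).tsum_le_tsum (fun k => ?_)
    (summable_gaussWeight_mul hg hx hx)
  have hk := gaussBranch_mem_Icc k hx
  exact mul_le_mul_of_nonneg_left (hg (by simp) hk hk.1) (gaussWeight_nonneg k hx)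

lemma gaussTransfer_zero (hg : MonotoneOn g (Set.Icc 0 1)) :
    gaussTransfer g 0 = (g 1 + gaussTransfer g 1) / 2 := by
  -- All branches at `0` but the first one occur at `1` as well, with twice the weight.
  have hterm (k : ℕ) : gaussWeight (k + 1) 0 * g (gaussBranch (k + 1) 0) =
      gaussWeight k 1 * g (gaussBranch k 1) / 2 := by
    have hbranch : gaussBranch (k + 1) 0 = gaussBranch k 1 := by simp [gaussBranch]
    have hweight : gaussWeight (k + 1) 0 = gaussWeight k 1 / 2 := by
      unfold gaussWeight
      push_cast
      field_simp
      ring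
    rw [hbranch, hweight]
    ring
  have hfirst : gaussWeight 0 0 * g (gaussBranch 0 0) = g 1 / 2 := by
    norm_num [gaussWeight, gaussBranch]
    ring
  rw [gaussTransfer, (summable_gaussWeight_mul hg le_rfl le_rfl).tsum_eq_zero_add, hfirst]
  simp only [hterm]
  rw [tsum_div_const, ← add_div, gaussTransfer]

lemma gaussTransfer_zero_sub_one_le (hg : MonotoneOn g (Set.Icc 0 1)) :
    gaussTransfer g 0 - gaussTransfer g 1 ≤ (g 1 - g 0) / 2 := by
  linarith [gaussTransfer_zero hg, le_gaussTransfer hg zero_le_one]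

end GaussTransfer

section GaussMeasure

variable {F g : ℝ → ℝ} {s : Set ℝ} {x : ℝ}

/-- The density `1 / (log 2 * (1 + x))` of the Gauss measure. -/
noncomputable def gaussDensity (x : ℝ) : ℝ := (Real.log 2)⁻¹ * (1 + x)⁻¹

/-- The Gauss measure on `(0, 1)`, regarded as a measure on `ℝ`; it is the invariant probability
measure of the Gauss map equivalent to Lebesgue measure on `(0, 1)`. -/
noncomputable def gaussMeasure : Measure ℝ :=
  (volume.restrict (Set.Ioo 0 1)).withDensity fun x => ENNReal.ofReal (gaussDensity x)

lemma measurable_gaussDensity : Measurable gaussDensity := by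
  unfold gaussDensity
  fun_prop

lemma gaussDensity_pos (hx : 0 ≤ x) : 0 < gaussDensity x := by
  unfold gaussDensity
  positivity

lemma gaussDensity_le (hx : 0 ≤ x) : gaussDensity x ≤ (Real.log 2)⁻¹ :=
  mul_le_of_le_one_right (by positivity) (inv_le_one_of_one_le₀ (by linarith))

lemma integrableOn_gaussDensity_mul (hF : IntegrableOn F (Set.Ioo 0 1)) :
    IntegrableOn (fun x => gaussDensity x * F x) (Set.Ioo 0 1) := by
  refine hF.bdd_mul (c := (Real.log 2)⁻¹) measurable_gaussDensity.aestronglyMeasurable ?_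
  filter_upwards [ae_restrict_mem measurableSet_Ioo] with x hx
  rw [Real.norm_of_nonneg (gaussDensity_pos hx.1.le).le]
  exact gaussDensity_le hx.1.le

lemma integrable_gaussMeasure (hF : IntegrableOn F (Set.Ioo 0 1)) : Integrable F gaussMeasure := by
  rw [gaussMeasure, integrable_withDensity_iff measurable_gaussDensity.ennreal_ofReal
    (ae_of_all _ fun x => ENNReal.ofReal_lt_top)]
  refine (integrableOn_gaussDensity_mul hF).congr ?_
  filter_upwards [ae_restrict_mem measurableSet_Ioo] with x hx
  rw [ENNReal.toReal_ofReal (gaussDensity_pos hx.1.le).le, mul_comm]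

lemma integral_gaussMeasure (F : ℝ → ℝ) :
    ∫ x, F x ∂gaussMeasure = ∫ x in Set.Ioo (0 : ℝ) 1, gaussDensity x * F x := by
  rw [gaussMeasure, integral_withDensity_eq_integral_toReal_smul
    measurable_gaussDensity.ennreal_ofReal (ae_of_all _ fun x => ENNReal.ofReal_lt_top)]
  refine setIntegral_congr_fun measurableSet_Ioo fun x hx => ?_
  rw [smul_eq_mul, ENNReal.toReal_ofReal (gaussDensity_pos hx.1.le).le]

lemma ae_mem_Ioo_gaussMeasure : ∀ᵐ x ∂gaussMeasure, x ∈ Set.Ioo (0 : ℝ) 1 :=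
  (withDensity_absolutelyContinuous _ _).ae_le (ae_restrict_mem measurableSet_Ioo)

lemma restrict_Ioo_absolutelyContinuous_gaussMeasure :
    volume.restrict (Set.Ioo (0 : ℝ) 1) ≪ gaussMeasure := by
  refine withDensity_absolutelyContinuous'
    measurable_gaussDensity.ennreal_ofReal.aemeasurable ?_
  filter_upwards [ae_restrict_mem measurableSet_Ioo] with x hx
  exact (ENNReal.ofReal_pos.2 (gaussDensity_pos hx.1.le)).ne'

lemma integral_gaussDensity : ∫ x in Set.Ioo (0 : ℝ) 1, gaussDensity x = 1 := by
  simp only [gaussDensity]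
  rw [integral_const_mul, ← integral_Ioc_eq_integral_Ioo,
    ← intervalIntegral.integral_of_le zero_le_one,
    intervalIntegral.integral_comp_add_left (fun x : ℝ => x⁻¹) 1, add_zero, one_add_one_eq_two,
    integral_inv_of_pos one_pos two_pos, div_one, inv_mul_cancel₀ (by positivity)]

instance isProbabilityMeasure_gaussMeasure : IsProbabilityMeasure gaussMeasure := by
  have hint : IntegrableOn gaussDensity (Set.Ioo 0 1) := by
    simpa only [mul_one] using
      integrableOn_gaussDensity_mul (integrableOn_const (C := (1 : ℝ)) (by simp))
  have hnonneg : 0 ≤ᵐ[volume.restrict (Set.Ioo 0 1)] gaussDensity := by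
    filter_upwards [ae_restrict_mem measurableSet_Ioo] with x hx
    exact (gaussDensity_pos hx.1.le).le
  constructor
  rw [gaussMeasure, withDensity_apply _ MeasurableSet.univ, Measure.restrict_univ,
    ← ofReal_integral_eq_lintegral_ofReal hint hnonneg, integral_gaussDensity, ENNReal.ofReal_one]

lemma inv_sq_mul_gaussDensity_gaussBranch (k : ℕ) (hx : 0 ≤ x) :
    (((k : ℝ) + 1 + x) ^ 2)⁻¹ * gaussDensity (gaussBranch k x) =
      gaussDensity x * gaussWeight k x := by
  have hlog : Real.log 2 ≠ 0 := by positivity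
  have hbranch : 1 + ((k : ℝ) + 1 + x)⁻¹ = ((k : ℝ) + 2 + x) / ((k : ℝ) + 1 + x) := by
    field_simp
    ring
  rw [gaussDensity, gaussDensity, gaussWeight, gaussBranch, hbranch]
  field_simp

lemma integral_gaussTransfer (hg : IntegrableOn g (Set.Ioo 0 1)) :
    ∫ x, gaussTransfer g x ∂gaussMeasure = ∫ x, g x ∂gaussMeasure := by
  rw [integral_gaussMeasure, integral_gaussMeasure,
    integral_eq_integral_tsum_gaussBranch (integrableOn_gaussDensity_mul hg)]
  refine setIntegral_congr_fun measurableSet_Ioo fun x hx => ?_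
  rw [gaussTransfer, ← tsum_mul_left]
  refine tsum_congr fun k => ?_
  rw [smul_eq_mul, ← mul_assoc, ← mul_assoc, inv_sq_mul_gaussDensity_gaussBranch k hx.1.le]

lemma gaussTransfer_indicator_preimage (g : ℝ → ℝ) (s : Set ℝ) (hx : x ∈ Set.Ico (0 : ℝ) 1) :
    gaussTransfer ((gaussMap ⁻¹' s).indicator g) x = s.indicator (gaussTransfer g) x := by
  by_cases hxs : x ∈ s <;>
    simp [gaussTransfer, Set.indicator, gaussMap_gaussBranch _ hx, hxs]

lemma setIntegral_gaussTransfer (hg : IntegrableOn g (Set.Ioo 0 1)) (hs : MeasurableSet s) :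
    ∫ x in s, gaussTransfer g x ∂gaussMeasure = ∫ x in gaussMap ⁻¹' s, g x ∂gaussMeasure := by
  have hpre := measurable_gaussMap hs
  rw [← integral_indicator hs, ← integral_indicator hpre,
    ← integral_gaussTransfer (Integrable.indicator hg hpre)]
  refine integral_congr_ae ?_
  filter_upwards [ae_mem_Ioo_gaussMeasure] with x hx
  exact (gaussTransfer_indicator_preimage g s (Set.Ioo_subset_Ico_self hx)).symm

lemma measurePreserving_gaussMap : MeasurePreserving gaussMap gaussMeasure gaussMeasure := by
  refine ⟨measurable_gaussMap, ?_⟩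
  ext s hs
  rw [Measure.map_apply measurable_gaussMap hs, ← measureReal_eq_measureReal_iff]
  calc gaussMeasure.real (gaussMap ⁻¹' s)
      = ∫ _ in gaussMap ⁻¹' s, (1 : ℝ) ∂gaussMeasure := by simp
    _ = ∫ x in s, gaussTransfer (fun _ => 1) x ∂gaussMeasure :=
        (setIntegral_gaussTransfer (integrableOn_const (by simp)) hs).symm
    _ = ∫ _ in s, (1 : ℝ) ∂gaussMeasure := by
        refine integral_congr_ae (ae_restrict_of_ae ?_)
        filter_upwards [ae_mem_Ioo_gaussMeasure] with x hx
        exact gaussTransfer_const 1 hx.1.le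
    _ = gaussMeasure.real s := by simp

end GaussMeasure

section SetCorrelation

variable {α : Type*} [MeasurableSpace α] {μ : Measure α} {A : Set α} {g : α → ℝ} {a b : ℝ}

/-- The covariance under `μ` of the indicator of `A` with `g`, for a probability measure `μ`. -/
noncomputable def setCorrelation (μ : Measure α) (A : Set α) (g : α → ℝ) : ℝ :=
  ∫ x in A, g x ∂μ - μ.real A * ∫ x, g x ∂μ

lemma setCorrelation_neg (μ : Measure α) (A : Set α) (g : α → ℝ) :
    setCorrelation μ A (fun x => -g x) = -setCorrelation μ A g := by
  rw [setCorrelation, setCorrelation, integral_neg, integral_neg]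
  ring

lemma setCorrelation_indicator_one {s : Set α} (hs : MeasurableSet s) :
    setCorrelation μ A (s.indicator 1) = μ.real (s ∩ A) - μ.real A * μ.real s := by
  rw [setCorrelation, integral_indicator_one hs, integral_indicator_one hs,
    measureReal_restrict_apply hs]

lemma abs_setCorrelation_le [IsProbabilityMeasure μ] (hg : Integrable g μ)
    (ha : ∀ᵐ x ∂μ, a ≤ g x) (hb : ∀ᵐ x ∂μ, g x ≤ b) : |setCorrelation μ A g| ≤ b - a := by
  have hlow : a ≤ ∫ x, g x ∂μ := by
    simpa using integral_mono_ae (integrable_const a) hg ha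
  have hupp : ∫ x, g x ∂μ ≤ b := by
    simpa using integral_mono_ae hg (integrable_const b) hb
  have hlowA : μ.real A * a ≤ ∫ x in A, g x ∂μ := by
    simpa using integral_mono_ae (integrable_const a) hg.integrableOn (ae_restrict_of_ae ha)
  have huppA : ∫ x in A, g x ∂μ ≤ μ.real A * b := by
    simpa using integral_mono_ae hg.integrableOn (integrable_const b) (ae_restrict_of_ae hb)
  have hA : 0 ≤ μ.real A := measureReal_nonneg
  calc |setCorrelation μ A g| ≤ μ.real A * (b - a) := by
        rw [setCorrelation, abs_le]
        constructor <;> nlinarith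
    _ ≤ b - a := mul_le_of_le_one_left (by linarith) measureReal_le_one

lemma eventuallyConst_ae_of_restrict_eq_smul (hA : MeasurableSet A)
    (h : μ.restrict A = μ A • μ) : EventuallyConst A (ae μ) := by
  have hprod : μ A * μ Aᶜ = 0 := by
    rw [← smul_eq_mul, ← Measure.smul_apply, ← h, Measure.restrict_apply hA.compl,
      Set.compl_inter_self, measure_empty]
  rw [eventuallyConst_set']
  exact (mul_eq_zero.1 hprod).imp ae_eq_empty.2 ae_eq_univ.2

lemma restrict_eq_smul_of_setCorrelation_indicator_Ici {α : Type*} [TopologicalSpace α]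
    [MeasurableSpace α] [SecondCountableTopology α] [LinearOrder α] [OrderTopology α]
    [BorelSpace α] {μ : Measure α} [IsFiniteMeasure μ] {A : Set α}
    (h : ∀ a, setCorrelation μ A ((Set.Ici a).indicator 1) = 0) : μ.restrict A = μ A • μ := by
  refine Measure.ext_of_Ici _ _ fun a => ?_
  have ha := h a
  rw [setCorrelation_indicator_one measurableSet_Ici, sub_eq_zero] at ha
  rw [Measure.restrict_apply measurableSet_Ici, Measure.smul_apply, smul_eq_mul,
    ← ENNReal.toReal_eq_toReal_iff' (by finiteness) (by finiteness), ENNReal.toReal_mul]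
  exact ha

end SetCorrelation

section GaussErgodic

variable {A : Set ℝ} {g : ℝ → ℝ}

lemma integrableOn_Ioo_of_monotoneOn_Icc {a b : ℝ} (hg : MonotoneOn g (Set.Icc a b)) :
    IntegrableOn g (Set.Ioo a b) :=
  (hg.integrableOn_isCompact isCompact_Icc).mono_set Set.Ioo_subset_Icc_self

lemma setCorrelation_gaussTransfer (hA : MeasurableSet A) (hinv : gaussMap ⁻¹' A = A)
    (hg : IntegrableOn g (Set.Ioo 0 1)) :
    setCorrelation gaussMeasure A (gaussTransfer g) = setCorrelation gaussMeasure A g := by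
  rw [setCorrelation, setCorrelation, setIntegral_gaussTransfer hg hA, hinv,
    integral_gaussTransfer hg]

lemma abs_setCorrelation_gaussMeasure_le (hg : MonotoneOn g (Set.Icc 0 1)) :
    |setCorrelation gaussMeasure A g| ≤ g 1 - g 0 := by
  refine abs_setCorrelation_le (integrable_gaussMeasure (integrableOn_Ioo_of_monotoneOn_Icc hg))
    ?_ ?_
  · filter_upwards [ae_mem_Ioo_gaussMeasure] with x hx
    exact hg (by simp) (Set.Ioo_subset_Icc_self hx) hx.1.le
  · filter_upwards [ae_mem_Ioo_gaussMeasure] with x hx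
    exact hg (Set.Ioo_subset_Icc_self hx) (by simp) hx.2.le

lemma abs_setCorrelation_le_half_pow_mul (hA : MeasurableSet A) (hinv : gaussMap ⁻¹' A = A)
    (n : ℕ) (hg : MonotoneOn g (Set.Icc 0 1)) :
    |setCorrelation gaussMeasure A g| ≤ (1 / 2) ^ n * (g 1 - g 0) := by
  induction n generalizing g with
  | zero => simpa using abs_setCorrelation_gaussMeasure_le hg
  | succ n ih =>
    calc |setCorrelation gaussMeasure A g|
        = |setCorrelation gaussMeasure A fun x => -gaussTransfer g x| := by
          rw [setCorrelation_neg, abs_neg,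
            setCorrelation_gaussTransfer hA hinv (integrableOn_Ioo_of_monotoneOn_Icc hg)]
      _ ≤ (1 / 2) ^ n * (-gaussTransfer g 1 - -gaussTransfer g 0) :=
          ih (antitoneOn_gaussTransfer hg).neg
      _ ≤ (1 / 2) ^ n * ((g 1 - g 0) / 2) := by
          gcongr
          linarith [gaussTransfer_zero_sub_one_le hg]
      _ = (1 / 2) ^ (n + 1) * (g 1 - g 0) := by ring

lemma setCorrelation_eq_zero (hA : MeasurableSet A) (hinv : gaussMap ⁻¹' A = A)
    (hg : MonotoneOn g (Set.Icc 0 1)) : setCorrelation gaussMeasure A g = 0 := by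
  have hlim : Tendsto (fun n : ℕ => (1 / 2 : ℝ) ^ n * (g 1 - g 0)) atTop (𝓝 0) := by
    simpa only [zero_mul] using (tendsto_pow_atTop_nhds_zero_of_lt_one (by norm_num)
      (by norm_num : (1 / 2 : ℝ) < 1)).mul_const (g 1 - g 0)
  exact abs_nonpos_iff.1
    (ge_of_tendsto' hlim fun n => abs_setCorrelation_le_half_pow_mul hA hinv n hg)

lemma monotone_indicator_Ici_one {α : Type*} [Preorder α] (a : α) :
    Monotone ((Set.Ici a).indicator (1 : α → ℝ)) := by
  intro x y hxy
  by_cases hx : x ∈ Set.Ici a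
  · have hy : y ∈ Set.Ici a := le_trans hx hxy
    rw [Set.indicator_of_mem hx, Set.indicator_of_mem hy, Pi.one_apply, Pi.one_apply]
  · rw [Set.indicator_of_notMem hx]
    exact Set.indicator_nonneg (fun _ _ => zero_le_one) y

theorem ergodic_gaussMap : Ergodic gaussMap gaussMeasure where
  toMeasurePreserving := measurePreserving_gaussMap
  aeconst_set _ hA hinv := eventuallyConst_ae_of_restrict_eq_smul hA <|
    restrict_eq_smul_of_setCorrelation_indicator_Ici fun a =>
      setCorrelation_eq_zero hA hinv ((monotone_indicator_Ici_one a).monotoneOn _)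

end GaussErgodic

section KhinchinLevy

lemma integral_neg_log_gaussMeasure :
    ∫ x, -Real.log x ∂gaussMeasure = π ^ 2 / (12 * Real.log 2) := by
  simp only [integral_gaussMeasure, gaussDensity, mul_assoc]
  rw [integral_const_mul, integral_inv_one_add_mul_neg_log]
  ring

lemma integrable_neg_log_gaussMeasure : Integrable (fun x => -Real.log x) gaussMeasure :=
  integrable_gaussMeasure (by simpa only [pow_zero, one_mul] using integrableOn_pow_mul_neg_log 0)

lemma ae_fract_of_ae_restrict_Ioo {p : ℝ → Prop}
    (h : ∀ᵐ x ∂volume.restrict (Set.Ioo (0 : ℝ) 1), p x) : ∀ᵐ a : ℝ, p (Int.fract a) := by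
  rw [ae_restrict_iff' measurableSet_Ioo] at h
  have hshift : ∀ᵐ a : ℝ, ∀ k : ℤ, a - k ∈ Set.Ioo (0 : ℝ) 1 → p (a - k) :=
    ae_all_iff.2 fun k =>
      (measurePreserving_sub_right volume (k : ℝ)).quasiMeasurePreserving.ae h
  filter_upwards [hshift, ae_irrational] with a ha hirr
  exact ha ⌊a⌋ (fract_mem_Ioo_of_irrational hirr)

theorem khinchin_levy_general :
    ∀ᵐ a : ℝ, Tendsto (fun n : ℕ => Real.log ((GenContFract.of a).dens n) / n) atTop
      (𝓝 (π ^ 2 / (12 * Real.log 2))) := by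
  have hbirkhoff := ae_tendsto_birkhoffAverage ergodic_gaussMap integrable_neg_log_gaussMeasure
  rw [integral_neg_log_gaussMeasure] at hbirkhoff
  filter_upwards [ae_irrational, ae_fract_of_ae_restrict_Ioo
    (restrict_Ioo_absolutelyContinuous_gaussMeasure.ae_le hbirkhoff)] with a hirr ha
  exact tendsto_log_dens_div_of_tendsto_birkhoffAverage hirr ha

end KhinchinLevy

/-- (Khinchin–Lévy theorem.) For almost every real `a > 0`, the denominators
`q_n` of the continued fraction convergents of `a` satisfy
`lim_{n→∞} (log q_n)/n = π²/(12 log 2)`. -/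
theorem khinchin_levy :
    ∀ᵐ a : ℝ, 0 < a →
      Tendsto (fun n : ℕ => Real.log ((GenContFract.of a).dens n) / n) atTop
        (𝓝 (π ^ 2 / (12 * Real.log 2))) :=
  khinchin_levy_general.mono fun _ h _ => h
end
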